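/- arXiv:2306.14593 — 2 statements merged into one kernel-verified Lean document; each statement's English description precedes it below -/
import Mathlib

section
/- Satisfiability of quantifier-free formulas of generalised Semёnov arithmetic is decidable: there exists a computable function f from (Gödel encodings of) such formulas, with their regular atoms presented by DFAs, to Bool such that f(Φ) = true if and only if Φ has a satisfying assignment over the natural numbers. (The paper moreover shows the problem lies in EXPSPACE.) -/
/-- A DFA over the alphabet `{0,1}^k`, presented as finite data. Letters are numbers
`a < 2^k` whose `j`-th bit is the `j`-th component of the letter; states are numbers;
the transition table maps the index `q * 2^k + a` to the next state. -/
structure RawDFA where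
  k : ℕ
  states : ℕ
  trans : List ℕ
  start : ℕ
  accept : List ℕ

/-- The (deterministic) transition function of the DFA. -/
def RawDFA.step (D : RawDFA) (q a : ℕ) : ℕ := D.trans.getD (q * 2 ^ D.k + a) 0

/-- The state reached on reading a word. -/
def RawDFA.run (D : RawDFA) (w : List ℕ) : ℕ := w.foldl D.step D.start

/-- The DFA accepts a word over `{0,1}^k` (letters coded as numbers `< 2^k`). -/
def RawDFA.Accepts (D : RawDFA) (w : List ℕ) : Prop :=
  (∀ a ∈ w, a < 2 ^ D.k) ∧ D.run w ∈ D.accept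

/-- The `j`-th component of the tuple `⟦w⟧ ∈ ℕ^k` denoted by a word over `{0,1}^k`
in msd-first notation. -/
def wordComp (j : ℕ) (w : List ℕ) : ℕ :=
  w.foldl (fun acc a => 2 * acc + (if a.testBit j then 1 else 0)) 0

/-- The language of `D` is zero-closed, i.e. closed under prepending the all-zero
letter (which is coded by the number `0`). -/
def RawDFA.ZeroClosed (D : RawDFA) : Prop :=
  ∀ (p : ℕ) (w : List ℕ), D.Accepts w → D.Accepts (List.replicate p 0 ++ w)

/-- Quantifier-free formulas of generalised Semënov arithmetic over variables indexed by `ℕ`: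
linear equations `a₁·x₀ + ⋯ + a_l·x_{l-1} = b`, exponential equations `x_i = 2^{x_j}`,
regular atoms `R(x_{i₁}, …, x_{i_k})` with `R` presented by a DFA over `{0,1}^k`, and
conjunctions and disjunctions. -/
inductive SFml where
  | lin : List ℤ → ℤ → SFml
  | expo : ℕ → ℕ → SFml
  | reg : RawDFA → List ℕ → SFml
  | and : SFml → SFml → SFml
  | or : SFml → SFml → SFml

/-- Well-formedness: every regular atom uses a DFA over `{0,1}^k` with `k ≥ 1` whose
language is zero-closed, applied to a list of `k` variables. -/
def SFml.WF : SFml → Prop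
  | .lin _ _ => True
  | .expo _ _ => True
  | .reg D xs => 1 ≤ D.k ∧ xs.length = D.k ∧ D.ZeroClosed
  | .and φ ψ => φ.WF ∧ ψ.WF
  | .or φ ψ => φ.WF ∧ ψ.WF

/-- Satisfaction under an assignment `v : ℕ → ℕ` of natural numbers to the variables. -/
def SFml.Sat (v : ℕ → ℕ) : SFml → Prop
  | .lin c b => (∑ i ∈ Finset.range c.length, c.getD i 0 * (v i : ℤ)) = b
  | .expo i j => v i = 2 ^ v j
  | .reg D xs => ∃ w : List ℕ, D.Accepts w ∧ ∀ j < D.k, wordComp j w = v (xs.getD j 0)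
  | .and φ ψ => φ.Sat v ∧ ψ.Sat v
  | .or φ ψ => φ.Sat v ∨ ψ.Sat v

/-- Gödel encoding of a DFA. -/
def RawDFA.enc (D : RawDFA) : ℕ :=
  Encodable.encode (D.k, D.states, D.trans, D.start, D.accept)

/-- Gödel encoding of formulas. -/
def SFml.enc : SFml → ℕ
  | .lin c b => Nat.pair 0 (Encodable.encode (c, b))
  | .expo i j => Nat.pair 1 (Nat.pair i j)
  | .reg D xs => Nat.pair 2 (Nat.pair D.enc (Encodable.encode xs))
  | .and φ ψ => Nat.pair 3 (Nat.pair φ.enc ψ.enc)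
  | .or φ ψ => Nat.pair 4 (Nat.pair φ.enc ψ.enc)


/-! ### Recognisable relations -/

def bitv (b : ℕ → Bool) (x : ℕ → ℕ) : ℕ → ℕ := fun i => Nat.bit (b i) (x i)

def Cong {Q : Type} (τ : (ℕ → ℕ) → Q) : Prop :=
  ∀ x y b, τ x = τ y → τ (bitv b x) = τ (bitv b y)

def Rec (N : ℕ) (R : (ℕ → ℕ) → Prop) : Prop :=
  ∃ (Q : Type) (τ : (ℕ → ℕ) → Q) (S : Finset Q), S.card ≤ N ∧ (∀ x, τ x ∈ S) ∧ Cong τ ∧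
    ∀ x y, τ x = τ y → R x → R y

theorem Rec.mono {N M : ℕ} {R} (h : Rec N R) (hNM : N ≤ M) : Rec M R := by
  obtain ⟨Q, τ, S, h1, h2⟩ := h
  exact ⟨Q, τ, S, h1.trans hNM, h2⟩

theorem Rec.congr {N : ℕ} {R R' : (ℕ → ℕ) → Prop} (h : Rec N R) (hR : ∀ x, R x ↔ R' x) :
    Rec N R' := by
  have : R = R' := by funext x; exact propext (hR x)
  exact this ▸ h

theorem Rec.const (p : Prop) : Rec 1 (fun _ => p) :=
  ⟨Unit, fun _ => (), {()}, by simp, by simp, fun _ _ _ _ => rfl, fun _ _ _ h => h⟩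

theorem Rec.prod {N M : ℕ} {R R' T : (ℕ → ℕ) → Prop} (h : Rec N R) (h' : Rec M R')
    (hT : ∀ x y, (R x ↔ R y) → (R' x ↔ R' y) → T x → T y) : Rec (N * M) T := by
  obtain ⟨Q, τ, S, h1, h2, h3, h4⟩ := h
  obtain ⟨Q', τ', S', h1', h2', h3', h4'⟩ := h'
  refine ⟨Q × Q', fun x => (τ x, τ' x), S ×ˢ S', ?_, ?_, ?_, ?_⟩
  · rw [Finset.card_product]; exact Nat.mul_le_mul h1 h1'
  · intro x; simp [h2, h2']
  · intro x y b h
    simp only [Prod.mk.injEq] at h ⊢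
    exact ⟨h3 _ _ _ h.1, h3' _ _ _ h.2⟩
  · intro x y h
    simp only [Prod.mk.injEq] at h
    exact hT x y ⟨h4 _ _ h.1, h4 _ _ h.1.symm⟩ ⟨h4' _ _ h.2, h4' _ _ h.2.symm⟩

theorem Rec.and {N M : ℕ} {R R'} (h : Rec N R) (h' : Rec M R') :
    Rec (N * M) (fun x => R x ∧ R' x) :=
  h.prod h' (by intro x y h1 h2; simp only [h1, h2]; exact id)

theorem Rec.or {N M : ℕ} {R R'} (h : Rec N R) (h' : Rec M R') :
    Rec (N * M) (fun x => R x ∨ R' x) :=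
  h.prod h' (by intro x y h1 h2; simp only [h1, h2]; exact id)

theorem Rec.list {α : Type} {D : ℕ} (l : List α) (R : α → (ℕ → ℕ) → Prop)
    (h : ∀ a ∈ l, Rec D (R a)) : Rec (D ^ l.length) (fun x => ∀ a ∈ l, R a x) := by
  induction l with
  | nil => simpa using Rec.const True
  | cons a l ih =>
    have h1 := (ih (fun b hb => h b (by simp [hb]))).and (h a (by simp))
    rw [List.length_cons, pow_succ]
    refine h1.congr fun x => ?_
    simp [and_comm]

theorem Rec.lin (f : (ℕ → ℕ) → ℤ) (g : (ℕ → Bool) → ℤ) (K : ℕ)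
    (hf : ∀ x b, f (bitv b x) = 2 * f x + g b) (hg : ∀ b, |g b| ≤ K) (R : ℤ → Prop)
    (hR : ∀ z z', max (-(K + 1 : ℤ)) (min (K + 1) z) = max (-(K + 1 : ℤ)) (min (K + 1) z') →
      R z → R z') :
    Rec (2 * K + 3) (fun x => R (f x)) := by
  refine ⟨ℤ, fun x => max (-(K + 1 : ℤ)) (min (K + 1) (f x)),
    Finset.Icc (-(K + 1 : ℤ)) (K + 1), ?_, ?_, ?_, ?_⟩
  · rw [Int.card_Icc]; omega
  · intro x; simp only [Finset.mem_Icc]; omega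
  · intro x y b h
    have := hg b
    rw [abs_le] at this
    simp only [hf] at h ⊢
    omega
  · intro x y h; exact hR _ _ h

theorem Rec.linEq (f : (ℕ → ℕ) → ℤ) (g : (ℕ → Bool) → ℤ) (K : ℕ)
    (hf : ∀ x b, f (bitv b x) = 2 * f x + g b) (hg : ∀ b, |g b| ≤ K) (c : ℤ) (hc : |c| ≤ K) :
    Rec (2 * K + 3) (fun x => f x = c) := by
  rw [abs_le] at hc
  exact Rec.lin f g K hf hg (fun z => z = c) (by intro z z' h h'; omega)

theorem Rec.linGe (f : (ℕ → ℕ) → ℤ) (g : (ℕ → Bool) → ℤ) (K : ℕ)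
    (hf : ∀ x b, f (bitv b x) = 2 * f x + g b) (hg : ∀ b, |g b| ≤ K) (c : ℤ) (hc : |c| ≤ K) :
    Rec (2 * K + 3) (fun x => c ≤ f x) := by
  rw [abs_le] at hc
  exact Rec.lin f g K hf hg (fun z => c ≤ z) (by intro z z' h h'; omega)

theorem bitv_cast (b : ℕ → Bool) (x : ℕ → ℕ) (i : ℕ) :
    ((bitv b x i : ℕ) : ℤ) = 2 * (x i : ℤ) + ((b i).toNat : ℤ) := by
  simp [bitv, Nat.bit_val]

theorem toNat_le_one (b : Bool) : 0 ≤ ((b.toNat : ℕ) : ℤ) ∧ ((b.toNat : ℕ) : ℤ) ≤ 1 := by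
  cases b <;> simp

/-- `x i = c` -/
theorem Rec.eqConst (i c K : ℕ) (hK : 1 ≤ K) (hc : c ≤ K) :
    Rec (2 * K + 3) (fun x => x i = c) := by
  refine (Rec.linEq (fun x => (x i : ℤ)) (fun b => ((b i).toNat : ℤ)) K
    (fun x b => bitv_cast b x i) ?_ (c : ℤ) ?_).congr ?_
  · intro b; have := toNat_le_one (b i); rw [abs_le]; omega
  · rw [abs_le]; omega
  · intro x; simp

theorem Rec.geConst (i c K : ℕ) (hK : 1 ≤ K) (hc : c ≤ K) :
    Rec (2 * K + 3) (fun x => c ≤ x i) := by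
  refine (Rec.linGe (fun x => (x i : ℤ)) (fun b => ((b i).toNat : ℤ)) K
    (fun x b => bitv_cast b x i) ?_ (c : ℤ) ?_).congr ?_
  · intro b; have := toNat_le_one (b i); rw [abs_le]; omega
  · rw [abs_le]; omega
  · intro x; simp

/-- `x i = x j + c` -/
theorem Rec.eqAdd (i j c K : ℕ) (hK : 1 ≤ K) (hc : c ≤ K) :
    Rec (2 * K + 3) (fun x => x i = x j + c) := by
  refine (Rec.linEq (fun x => (x i : ℤ) - x j) (fun b => ((b i).toNat : ℤ) - ((b j).toNat : ℤ)) K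
    (fun x b => by rw [bitv_cast, bitv_cast]; ring) ?_ (c : ℤ) ?_).congr ?_
  · intro b; have := toNat_le_one (b i); have := toNat_le_one (b j); rw [abs_le]; omega
  · rw [abs_le]; omega
  · intro x; omega

theorem Rec.geAdd (i j c K : ℕ) (hK : 1 ≤ K) (hc : c ≤ K) :
    Rec (2 * K + 3) (fun x => x j + c ≤ x i) := by
  refine (Rec.linGe (fun x => (x i : ℤ) - x j) (fun b => ((b i).toNat : ℤ) - ((b j).toNat : ℤ)) K
    (fun x b => by rw [bitv_cast, bitv_cast]; ring) ?_ (c : ℤ) ?_).congr ?_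
  · intro b; have := toNat_le_one (b i); have := toNat_le_one (b j); rw [abs_le]; omega
  · rw [abs_le]; omega
  · intro x; omega

/-- `x i = a * x j` -/
theorem Rec.eqMul (i j a K : ℕ) (hK : a + 1 ≤ K) :
    Rec (2 * K + 3) (fun x => x i = a * x j) := by
  refine (Rec.linEq (fun x => (x i : ℤ) - a * x j)
    (fun b => ((b i).toNat : ℤ) - a * ((b j).toNat : ℤ)) K
    (fun x b => by rw [bitv_cast, bitv_cast]; ring) ?_ 0 ?_).congr ?_
  · intro b
    have := toNat_le_one (b i)
    rw [abs_le]
    cases b j <;> simp <;> omega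
  · simp
  · intro x
    rw [sub_eq_zero]
    exact_mod_cast Iff.rfl

theorem Rec.mod (i M r : ℕ) (hM : 0 < M) : Rec M (fun x => x i % M = r) := by
  refine ⟨ℕ, fun x => x i % M, Finset.range M, by simp, ?_, ?_, ?_⟩
  · intro x; simpa using Nat.mod_lt _ hM
  · intro x y b h
    have h' : x i ≡ y i [MOD M] := h
    change bitv b x i ≡ bitv b y i [MOD M]
    simp only [bitv, Nat.bit_val]
    exact (h'.mul_left 2).add_right _
  · intro x y h; simp only at h ⊢; rw [h]; exact id

/-! ### Pigeonhole -/

theorem iter_shift {α : Type} (f : α → α) (a : α) (i d : ℕ) (h : f^[i + d] a = f^[i] a) (t : ℕ)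
    (ht : i ≤ t) : f^[t + d] a = f^[t] a := by
  obtain ⟨k, rfl⟩ := Nat.exists_eq_add_of_le ht
  rw [show i + k + d = k + (i + d) by ring, show i + k = k + i by ring,
    Function.iterate_add_apply, h, ← Function.iterate_add_apply]

theorem iter_shift_mul {α : Type} (f : α → α) (a : α) (i d : ℕ) (h : f^[i + d] a = f^[i] a) (t : ℕ)
    (ht : i ≤ t) (k : ℕ) : f^[t + d * k] a = f^[t] a := by
  induction k with
  | zero => simp
  | succ k ih =>
    rw [Nat.mul_succ, ← Nat.add_assoc, iter_shift f a i d h _ (by omega), ih]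

theorem iter_pig {α : Type} (s : Finset α) (f : α → α) (a : α) (hs : ∀ t, f^[t] a ∈ s) (P : ℕ)
    (hP : s.card ≤ P) : ∃ i d, 0 < d ∧ i + d ≤ P ∧ f^[i + d] a = f^[i] a := by
  obtain ⟨x, hx, y, hy, hxy, h⟩ := Finset.exists_ne_map_eq_of_card_lt_of_maps_to
    (s := Finset.range (P + 1)) (t := s) (f := fun t => f^[t] a) (by simp; omega)
    (fun t _ => hs t)
  simp only [Finset.mem_range] at hx hy
  rcases lt_or_gt_of_ne hxy with hlt | hlt
  · refine ⟨x, y - x, by omega, by omega, ?_⟩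
    rw [show x + (y - x) = y by omega]; exact h.symm
  · refine ⟨y, x - y, by omega, by omega, ?_⟩
    rw [show y + (x - y) = x by omega]; exact h

theorem iter_period {α : Type} (s : Finset α) (f : α → α) (a : α) (hs : ∀ t, f^[t] a ∈ s) (P : ℕ)
    (hP : s.card ≤ P) (t : ℕ) (ht : P ≤ t) (k : ℕ) : f^[t + P.factorial * k] a = f^[t] a := by
  obtain ⟨i, d, hd, hid, h⟩ := iter_pig s f a hs P hP
  obtain ⟨c, hc⟩ : d ∣ P.factorial := Nat.dvd_factorial hd (by omega)
  rw [hc, Nat.mul_assoc]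
  exact iter_shift_mul f a i d h t (by omega) _

theorem iter_period_mod {α : Type} (s : Finset α) (f : α → α) (a : α) (hs : ∀ t, f^[t] a ∈ s)
    (P : ℕ) (hP : s.card ≤ P) (t t' : ℕ) (ht : P ≤ t) (ht' : P ≤ t')
    (h : t ≡ t' [MOD P.factorial]) : f^[t] a = f^[t'] a := by
  wlog hle : t ≤ t' generalizing t t'
  · exact (this t' t ht' ht h.symm (by omega)).symm
  obtain ⟨k, hk⟩ := (Nat.modEq_iff_dvd' hle).1 h
  rw [show t' = t + P.factorial * k by omega, iter_period s f a hs P hP t ht]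

theorem iter_small {α : Type} (s : Finset α) (f : α → α) (a : α) (hs : ∀ t, f^[t] a ∈ s) (P : ℕ)
    (hP : s.card ≤ P) (T : ℕ) : ∃ t ≤ P, f^[t] a = f^[T] a := by
  obtain ⟨i, d, hd, hid, h⟩ := iter_pig s f a hs P hP
  induction T using Nat.strong_induction_on with
  | _ T ih =>
    by_cases hT : T ≤ P
    · exact ⟨T, hT, rfl⟩
    · obtain ⟨t, ht, h2⟩ := ih (T - d) (by omega)
      refine ⟨t, ht, ?_⟩
      rw [h2, ← iter_shift f a i d h (T - d) (by omega)]
      congr 2; omega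

/-! ### Shifting -/

def shl (s : ℕ) (u y : ℕ → ℕ) : ℕ → ℕ := fun i => 2 ^ s * u i + y i

theorem shl_succ (s : ℕ) (u y : ℕ → ℕ) :
    shl (s + 1) u y = bitv (fun i => (y i).bodd) (shl s u (fun i => y i / 2)) := by
  funext i
  have h1 := Nat.bodd_add_div2 (y i)
  rw [Nat.div2_val] at h1
  have : cond (y i).bodd 1 0 = (y i).bodd.toNat := by cases (y i).bodd <;> rfl
  simp only [shl, bitv, Nat.bit_val, pow_succ]
  nlinarith

theorem shl_bitv (s : ℕ) (u y : ℕ → ℕ) (b) : shl (s + 1) u (bitv b y) = bitv b (shl s u y) := by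
  funext i
  simp only [shl, bitv, Nat.bit_val, pow_succ]
  ring

theorem shl_zero_zero (u : ℕ → ℕ) : shl 0 u (fun _ => 0) = u := by
  funext i; simp [shl]

theorem Cong.shift {Q : Type} {τ : (ℕ → ℕ) → Q} (hτ : Cong τ) (s : ℕ) (u u' y : ℕ → ℕ)
    (h : τ u = τ u') : (∀ i, y i < 2 ^ s) → τ (shl s u y) = τ (shl s u' y) := by
  induction s generalizing y with
  | zero =>
    intro hy
    have : y = fun _ => 0 := by funext i; have := hy i; simp at this; exact this
    simpa [this, shl_zero_zero] using h
  | succ s ih =>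
    intro hy
    rw [shl_succ, shl_succ]
    apply hτ
    apply ih
    intro i
    have := hy i
    rw [pow_succ] at this
    omega

theorem shl_div_mod (s : ℕ) (v : ℕ → ℕ) : shl s (fun i => v i / 2 ^ s) (fun i => v i % 2 ^ s) = v := by
  funext i; simp only [shl]; exact Nat.div_add_mod _ _


theorem Rec.fin {N : ℕ} {R : (ℕ → ℕ) → Prop} (h : Rec N R) :
    ∃ (Q : Type) (_ : Fintype Q) (τ : (ℕ → ℕ) → Q) (δ : Q → (ℕ → Bool) → Q),
      Fintype.card Q ≤ N ∧ (∀ x b, τ (bitv b x) = δ (τ x) b) ∧ ∀ x y, τ x = τ y → R x → R y := by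
  classical
  obtain ⟨Q, τ, S, h1, h2, h3, h4⟩ := h
  refine ⟨S, inferInstance, fun x => ⟨τ x, h2 x⟩, fun q b =>
    if h : ∃ x, τ x = q.1 then ⟨τ (bitv b h.choose), h2 _⟩ else q, by simpa using h1, ?_, ?_⟩
  · intro x b
    have h : ∃ y, τ y = τ x := ⟨x, rfl⟩
    simp only [h, dite_true, Subtype.mk.injEq]
    exact h3 _ _ _ h.choose_spec.symm
  · intro x y h
    simp only [Subtype.mk.injEq] at h
    exact h4 x y h

theorem layer {Q : Type} (τ : (ℕ → ℕ) → Q) (δ : Q → (ℕ → Bool) → Q)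
    (hδ : ∀ x b, τ (bitv b x) = δ (τ x) b) (C : ℕ → (ℕ → ℕ) → Prop) (good : (ℕ → Bool) → Prop)
    (hC : ∀ t u b, good b → C t u → C (t + 1) (bitv b u))
    (hC' : ∀ t u, C (t + 1) u → ∃ u' b, good b ∧ C t u' ∧ u = bitv b u') :
    ∃ (f : Set Q → Set Q) (a : Set Q), ∀ t, f^[t] a = {q | ∃ u, C t u ∧ τ u = q} := by
  refine ⟨fun S => {q | ∃ p ∈ S, ∃ b, good b ∧ δ p b = q}, {q | ∃ u, C 0 u ∧ τ u = q}, ?_⟩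
  intro t
  induction t with
  | zero => rfl
  | succ t ih =>
    rw [Function.iterate_succ_apply', ih]
    ext q
    constructor
    · rintro ⟨p, ⟨u, hu, rfl⟩, b, hb, rfl⟩
      exact ⟨bitv b u, hC _ _ _ hb hu, hδ _ _⟩
    · rintro ⟨u, hu, rfl⟩
      obtain ⟨u', b, hb, hu', rfl⟩ := hC' _ _ hu
      exact ⟨τ u', ⟨u', hu', rfl⟩, b, hb, (hδ _ _).symm⟩

theorem bitv_half (u : ℕ → ℕ) : u = bitv (fun i => (u i).bodd) (fun i => (u i).div2) := by
  funext i; simp [bitv, Nat.bit_bodd_div2]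

theorem bit_lt_pow (b : Bool) (x t : ℕ) : Nat.bit b x < 2 ^ (t + 1) ↔ x < 2 ^ t := by
  rw [Nat.bit_val, pow_succ]
  cases b <;> simp <;> omega

theorem bit_eq_zero' (b : Bool) (x : ℕ) : Nat.bit b x = 0 ↔ x = 0 ∧ b = false := by
  cases b <;> simp [Nat.bit_val]

theorem clean_state {Q : Type} [Fintype Q] (τ : (ℕ → ℕ) → Q) (δ : Q → (ℕ → Bool) → Q)
    (hδ : ∀ x b, τ (bitv b x) = δ (τ x) b) (N : ℕ) (hN : Fintype.card Q ≤ N) (x : ℕ → ℕ) (T : ℕ)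
    (hx : ∀ i, x i < 2 ^ T) :
    ∃ x', τ x' = τ x ∧ (∀ i, x' i < 2 ^ 2 ^ N) ∧ ∀ i, x i = 0 → x' i = 0 := by
  classical
  obtain ⟨f, a, hfa⟩ := layer τ δ hδ
    (fun t u => (∀ i, u i < 2 ^ t) ∧ ∀ i, x i = 0 → u i = 0) (fun b => ∀ i, x i = 0 → b i = false)
    (by
      rintro t u b hb ⟨h1, h2⟩
      refine ⟨fun i => (bit_lt_pow _ _ _).2 (h1 i), fun i hi => ?_⟩
      exact (bit_eq_zero' _ _).2 ⟨h2 i hi, hb i hi⟩)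
    (by
      rintro t u ⟨h1, h2⟩
      rw [bitv_half u] at h1 h2
      refine ⟨_, _, ?_, ⟨?_, ?_⟩, bitv_half u⟩
      · exact fun i hi => ((bit_eq_zero' _ _).1 (h2 i hi)).2
      · exact fun i => (bit_lt_pow _ _ _).1 (h1 i)
      · exact fun i hi => ((bit_eq_zero' _ _).1 (h2 i hi)).1)
  obtain ⟨t, ht, hta⟩ := iter_small Finset.univ f a (fun _ => Finset.mem_univ _) (2 ^ N)
    (by rw [Finset.card_univ, Fintype.card_set]; exact Nat.pow_le_pow_right (by norm_num) hN) T
  rw [hfa, hfa] at hta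
  have : τ x ∈ {q | ∃ u, ((∀ i, u i < 2 ^ T) ∧ ∀ i, x i = 0 → u i = 0) ∧ τ u = q} :=
    ⟨x, ⟨hx, fun _ h => h⟩, rfl⟩
  rw [← hta] at this
  obtain ⟨u, ⟨h1, h2⟩, h3⟩ := this
  exact ⟨u, h3, fun i => (h1 i).trans_le (Nat.pow_le_pow_right (by norm_num) ht), h2⟩

def Sol (E : List (ℕ × ℕ)) (v : ℕ → ℕ) : Prop := ∀ p ∈ E, v p.1 = 2 ^ v p.2

def Bdd (v : ℕ → ℕ) : Prop := ∃ T, ∀ i, v i < 2 ^ T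

theorem clean {N : ℕ} {R : (ℕ → ℕ) → Prop} (hR : Rec N R) (E : List (ℕ × ℕ)) (v : ℕ → ℕ)
    (hv : Bdd v) (hRv : R v) (hE : Sol E v) (T : ℕ) (hT : ∀ p ∈ E, v p.2 ≤ T) :
    ∃ v', (∀ i, v' i < 2 ^ (T + 1 + 2 ^ N)) ∧ R v' ∧ Sol E v' := by
  obtain ⟨Q, _, τ, δ, hN, hδ, hRτ⟩ := hR.fin
  have hcong : Cong τ := fun x y b h => by rw [hδ, hδ, h]
  obtain ⟨T', hT'⟩ := hv
  obtain ⟨a, ha, ha1, ha2⟩ := clean_state τ δ hδ N hN (fun i => v i / 2 ^ (T + 1)) T'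
    (fun i => (Nat.div_le_self _ _).trans_lt (hT' i))
  have hlt : ∀ i, v i % 2 ^ (T + 1) < 2 ^ (T + 1) := fun i => Nat.mod_lt _ (by positivity)
  have key : ∀ i, v i < 2 ^ (T + 1) → shl (T + 1) a (fun i => v i % 2 ^ (T + 1)) i = v i := by
    intro i hi
    simp only [shl]
    rw [ha2 i (Nat.div_eq_of_lt hi), Nat.mod_eq_of_lt hi]
    simp
  refine ⟨shl (T + 1) a (fun i => v i % 2 ^ (T + 1)), ?_, ?_, ?_⟩
  · intro i
    simp only [shl]
    have h1 := ha1 i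
    have h2 := hlt i
    rw [pow_add 2 (T + 1)]
    calc 2 ^ (T + 1) * a i + v i % 2 ^ (T + 1) < 2 ^ (T + 1) * (a i + 1) := by linarith
      _ ≤ _ := Nat.mul_le_mul_left _ h1
  · apply hRτ v _ _ hRv
    have := hcong.shift (T + 1) a _ _ ha hlt
    rw [this, shl_div_mod]
  · intro p hp
    have h1 := hT p hp
    have h2 : v p.1 < 2 ^ (T + 1) := by
      rw [hE p hp]; exact Nat.pow_lt_pow_right (by norm_num) (by omega)
    have h3 : v p.2 < 2 ^ (T + 1) :=
      h1.trans_lt (Nat.lt_two_pow_self.trans (Nat.pow_lt_pow_right (by norm_num) (by omega)))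
    rw [key _ h2, key _ h3, hE p hp]

/-! ### Eliminating the largest exponent -/

def szK (K : Finset ℕ) (y : ℕ → ℕ) : ℕ := K.sup fun k => Nat.size (y k)

theorem szK_le (K : Finset ℕ) (y : ℕ → ℕ) (s : ℕ) : szK K y ≤ s ↔ ∀ k ∈ K, y k < 2 ^ s := by
  simp [szK, Finset.sup_le_iff, Nat.size_le]

theorem szK_bitv_le (K : Finset ℕ) (y : ℕ → ℕ) (b) (s : ℕ) :
    szK K (bitv b y) ≤ s + 1 ↔ szK K y ≤ s := by
  simp [szK_le, bitv, bit_lt_pow]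

theorem szK_bitv (K : Finset ℕ) (y : ℕ → ℕ) (b) (h : szK K y ≠ 0) :
    szK K (bitv b y) = szK K y + 1 := by
  have h1 := (szK_bitv_le K y b (szK K y)).2 le_rfl
  have h2 := szK_bitv_le K y b (szK K y - 1)
  omega

theorem rec_shift {N : ℕ} {R : (ℕ → ℕ) → Prop} (hR : Rec N R) (K : Finset ℕ) (u : ℕ → ℕ) (M r : ℕ)
    (hM : 0 < M) : Rec (2 * (N * M) + 1) (fun y => (∀ i, y i < 2 ^ szK K y) ∧
      R (shl (szK K y) u y) ∧ szK K y % M = r) := by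
  classical
  obtain ⟨Q, τ, S, h1, h2, h3, h4⟩ := hR
  refine ⟨Option (Q × ℕ × Bool), fun y => if ∀ i, y i < 2 ^ szK K y then
    some (τ (shl (szK K y) u y), szK K y % M, decide (szK K y = 0)) else none,
    (S ×ˢ (Finset.range M ×ˢ Finset.univ)).insertNone, ?_, ?_, ?_, ?_⟩
  · rw [Finset.card_insertNone]
    simp only [Finset.card_product, Finset.card_range, Finset.card_univ, Fintype.card_bool]
    have : S.card * (M * 2) ≤ N * (M * 2) := Nat.mul_le_mul_right _ h1
    linarith
  · intro y
    dsimp only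
    split_ifs
    · simp [h2, Nat.mod_lt _ hM]
    · simp
  · intro x y b h
    dsimp only at h ⊢
    have dead : ∀ x : ℕ → ℕ, (¬ ∀ i, x i < 2 ^ szK K x) →
        ¬ ∀ i, bitv b x i < 2 ^ szK K (bitv b x) := by
      intro x hx h
      apply hx
      intro i
      have h1 := h i
      have h2 := (szK_bitv_le K x b (szK K x)).2 le_rfl
      exact (bit_lt_pow _ _ _).1 (h1.trans_le (Nat.pow_le_pow_right (by norm_num) h2))
    by_cases hx : ∀ i, x i < 2 ^ szK K x
    · by_cases hy : ∀ i, y i < 2 ^ szK K y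
      · rw [if_pos hx, if_pos hy] at h
        simp only [Option.some.injEq, Prod.mk.injEq, decide_eq_decide] at h
        obtain ⟨ha, hb, hc⟩ := h
        by_cases h0 : szK K x = 0
        · have h0' := hc.1 h0
          have hxy : x = y := by
            funext i
            have := hx i
            have := hy i
            rw [h0] at *
            rw [h0'] at *
            simp at *
            omega
          rw [hxy]
        · have h0' : szK K y ≠ 0 := fun h => h0 (hc.2 h)
          have hx' : ∀ i, bitv b x i < 2 ^ szK K (bitv b x) := by
            intro i; rw [szK_bitv K x b h0]; exact (bit_lt_pow _ _ _).2 (hx i)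
          have hy' : ∀ i, bitv b y i < 2 ^ szK K (bitv b y) := by
            intro i; rw [szK_bitv K y b h0']; exact (bit_lt_pow _ _ _).2 (hy i)
          rw [if_pos hx', if_pos hy']
          simp only [Option.some.injEq, Prod.mk.injEq, decide_eq_decide]
          rw [szK_bitv K x b h0, szK_bitv K y b h0', shl_bitv, shl_bitv]
          refine ⟨h3 _ _ _ ha, ?_, by simp⟩
          exact Nat.ModEq.add_right 1 hb
      · rw [if_pos hx, if_neg hy] at h; simp at h
    · by_cases hy : ∀ i, y i < 2 ^ szK K y
      · rw [if_neg hx, if_pos hy] at h; simp at h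
      · rw [if_neg (dead x hx), if_neg (dead y hy)]
  · rintro x y h ⟨hx, hR, hr⟩
    dsimp only at h
    rw [if_pos hx] at h
    by_cases hy : ∀ i, y i < 2 ^ szK K y
    · rw [if_pos hy] at h
      simp only [Option.some.injEq, Prod.mk.injEq] at h
      exact ⟨hy, h4 _ _ h.1 hR, by rw [← h.2.1]; exact hr⟩
    · rw [if_neg hy] at h; simp at h


def KK (N : ℕ) : ℕ := 2 ^ (2 * 2 ^ N + 4) + 1
def DD (N : ℕ) : ℕ := 2 * KK N + 3
def gg (N : ℕ) : ℕ :=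
  (2 * (N * (2 ^ N).factorial) + 1) * (2 ^ N).factorial * (DD N) ^ N * DD N * DD N

theorem size_le_half (x : ℕ) : Nat.size x ≤ x / 2 + 1 := by
  rw [Nat.size_le]
  have : x / 2 + 1 < 2 ^ (x / 2 + 1) := Nat.lt_two_pow_self
  have h2 : x / 2 < 2 ^ (x / 2) := Nat.lt_two_pow_self
  rw [pow_succ]
  omega

theorem period_prefix {Q : Type} [Fintype Q] (τ : (ℕ → ℕ) → Q) (δ : Q → (ℕ → Bool) → Q)
    (hδ : ∀ x b, τ (bitv b x) = δ (τ x) b) (N : ℕ) (hN : Fintype.card Q ≤ N) (K : Finset ℕ)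
    (i1 l l' : ℕ) (hl : 2 ^ N ≤ l) (hl' : 2 ^ N ≤ l') (hll : l ≡ l' [MOD (2 ^ N).factorial])
    (u : ℕ → ℕ) (hu : Bdd u) (huK : ∀ k ∈ K, u k = 0) (hu1 : u i1 = 2 ^ l) :
    ∃ u', τ u' = τ u ∧ Bdd u' ∧ (∀ k ∈ K, u' k = 0) ∧ u' i1 = 2 ^ l' := by
  classical
  obtain ⟨f, a, hfa⟩ := layer τ δ hδ
    (fun t u => Bdd u ∧ (∀ k ∈ K, u k = 0) ∧ u i1 = 2 ^ t)
    (fun b => (∀ k ∈ K, b k = false) ∧ b i1 = false)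
    (by
      rintro t u b ⟨hb, hb1⟩ ⟨⟨T, hT⟩, h2, h3⟩
      refine ⟨⟨T + 1, fun i => (bit_lt_pow _ _ _).2 (hT i)⟩, fun i hi => ?_, ?_⟩
      · exact (bit_eq_zero' _ _).2 ⟨h2 i hi, hb i hi⟩
      · simp [bitv, hb1, h3, Nat.bit_val, pow_succ, mul_comm])
    (by
      rintro t u ⟨⟨T, hT⟩, h2, h3⟩
      have h2' := h2
      rw [bitv_half u] at h2'
      refine ⟨_, _, ⟨?_, ?_⟩, ⟨⟨T, ?_⟩, ?_, ?_⟩, bitv_half u⟩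
      · exact fun i hi => ((bit_eq_zero' _ _).1 (h2' i hi)).2
      · simp [h3, pow_succ]
      · intro i
        simp only [Nat.div2_val]
        exact (Nat.div_le_self _ _).trans_lt (hT i)
      · exact fun i hi => ((bit_eq_zero' _ _).1 (h2' i hi)).1
      · simp [h3, pow_succ, Nat.div2_val])
  have := iter_period_mod Finset.univ f a (fun _ => Finset.mem_univ _) (2 ^ N)
    (by rw [Finset.card_univ, Fintype.card_set]; exact Nat.pow_le_pow_right (by norm_num) hN)
    l l' hl hl' hll
  rw [hfa, hfa] at this
  have hm : τ u ∈ {q | ∃ u, (Bdd u ∧ (∀ k ∈ K, u k = 0) ∧ u i1 = 2 ^ l) ∧ τ u = q} :=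
    ⟨u, ⟨hu, huK, hu1⟩, rfl⟩
  rw [this] at hm
  obtain ⟨u', ⟨h1, h2, h3⟩, h4⟩ := hm
  exact ⟨u', h4, h1, h2, h3⟩

theorem elim {N : ℕ} {R : (ℕ → ℕ) → Prop} (hR : Rec N R) (E : List (ℕ × ℕ)) (i1 j1 : ℕ)
    (v : ℕ → ℕ) (hv : Bdd v) (hRv : R v) (hE : Sol E v) (h1 : v i1 = 2 ^ v j1)
    (hgap : ∀ p ∈ E, v p.2 + (2 ^ N + 2) ≤ v j1) (hbig : 2 * 2 ^ N + 4 ≤ v j1)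
    (hlen : E.length ≤ N) :
    ∃ R', Rec (gg N) R' ∧ (∃ y, Bdd y ∧ R' y ∧ Sol E y) ∧
      ∀ y, R' y → Sol E y → ∃ w, Bdd w ∧ R w ∧ Sol E w ∧ w i1 = 2 ^ w j1 ∧ w j1 = y j1 ∧
        ∀ p ∈ E, w p.2 = y p.2 := by
  classical
  set M := (2 ^ N).factorial with hM
  have hMpos : 0 < M := Nat.factorial_pos _
  let K : Finset ℕ := insert j1 (E.map Prod.fst ++ E.map Prod.snd).toFinset
  have hKj : j1 ∈ K := by simp [K]
  have hK1 : ∀ p ∈ E, p.1 ∈ K := by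
    intro p hp; simp only [K, Finset.mem_insert, List.mem_toFinset, List.mem_append, List.mem_map]
    exact Or.inr (Or.inl ⟨p, hp, rfl⟩)
  have hK2 : ∀ p ∈ E, p.2 ∈ K := by
    intro p hp; simp only [K, Finset.mem_insert, List.mem_toFinset, List.mem_append, List.mem_map]
    exact Or.inr (Or.inr ⟨p, hp, rfl⟩)
  have hKmem : ∀ k ∈ K, k = j1 ∨ ∃ p ∈ E, k = p.1 ∨ k = p.2 := by
    intro k hk
    simp only [K, Finset.mem_insert, List.mem_toFinset, List.mem_append, List.mem_map] at hk
    rcases hk with h | ⟨p, hp, rfl⟩ | ⟨p, hp, rfl⟩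
    · exact Or.inl h
    · exact Or.inr ⟨p, hp, Or.inl rfl⟩
    · exact Or.inr ⟨p, hp, Or.inr rfl⟩
  -- the size of the `K`-part is well below the largest exponent
  have hsz : ∀ y : ℕ → ℕ, Sol E y → (∀ p ∈ E, y p.2 + (2 ^ N + 2) ≤ y j1) →
      2 * 2 ^ N + 4 ≤ y j1 → szK K y + 2 ^ N ≤ y j1 := by
    intro y hy hg hb
    have : szK K y ≤ y j1 - 2 ^ N := by
      rw [szK_le]
      intro k hk
      rcases hKmem k hk with rfl | ⟨p, hp, rfl | rfl⟩
      · rw [← Nat.size_le]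
        have := size_le_half (y k)
        omega
      · rw [hy p hp]
        apply Nat.pow_lt_pow_right (by norm_num)
        have := hg p hp
        omega
      · have := hg p hp
        refine Nat.lt_two_pow_self.trans_le (Nat.pow_le_pow_right (by norm_num) ?_)
        omega
    omega
  set s := szK K v with hs
  have hsv := hsz v hE hgap hbig
  rw [← hs] at hsv
  have hKlt : ∀ k ∈ K, v k < 2 ^ s := (szK_le K v s).1 le_rfl
  let u : ℕ → ℕ := fun i => v i / 2 ^ s
  let y0 : ℕ → ℕ := fun i => v i % 2 ^ s
  have hy0K : ∀ k ∈ K, y0 k = v k := fun k hk => Nat.mod_eq_of_lt (hKlt k hk)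
  have hszy0 : szK K y0 = s := by
    rw [hs]; exact Finset.sup_congr rfl fun k hk => by rw [hy0K k hk]
  have hsplit : v i1 = 2 ^ s * 2 ^ (v j1 - s) := by
    rw [h1, ← pow_add]; congr 1; omega
  have hu : Bdd u := by
    obtain ⟨T, hT⟩ := hv
    exact ⟨T, fun i => (Nat.div_le_self _ _).trans_lt (hT i)⟩
  have huK : ∀ k ∈ K, u k = 0 := fun k hk => Nat.div_eq_of_lt (hKlt k hk)
  have hu1 : u i1 = 2 ^ (v j1 - s) := by
    simp only [u]; rw [hsplit]; exact Nat.mul_div_cancel_left _ (by positivity)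
  have hy01 : y0 i1 = 0 := by
    simp only [y0]; rw [hsplit]; exact Nat.mul_mod_right _ _
  have hi1K : i1 ∉ K := by
    intro h
    have h2 := huK i1 h
    rw [hu1] at h2
    simp at h2
  refine ⟨fun y => (((((∀ i, y i < 2 ^ szK K y) ∧ R (shl (szK K y) u y) ∧ szK K y % M = s % M) ∧
    y j1 % M = v j1 % M) ∧ (∀ p ∈ E, y p.2 + (2 ^ N + 2) ≤ y j1)) ∧ 2 * 2 ^ N + 4 ≤ y j1) ∧
    y i1 = 0, ?_, ⟨y0, ?_, ?_, ?_⟩, ?_⟩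
  · have hKK1 : 1 ≤ KK N := Nat.le_add_left _ _
    have hKK2 : 2 * 2 ^ N + 4 ≤ KK N := by
      unfold KK
      have : 2 * 2 ^ N + 4 < 2 ^ (2 * 2 ^ N + 4) := Nat.lt_two_pow_self
      omega
    have r1 := rec_shift hR K u M (s % M) hMpos
    have r2 := Rec.mod j1 M (v j1 % M) hMpos
    have r3 : Rec (DD N ^ N) (fun y => ∀ p ∈ E, y p.2 + (2 ^ N + 2) ≤ y j1) :=
      (Rec.list (D := DD N) E (fun p y => y p.2 + (2 ^ N + 2) ≤ y j1)
        (fun p _ => Rec.geAdd j1 p.2 _ (KK N) hKK1 (by omega))).mono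
        (Nat.pow_le_pow_right (by unfold DD; omega) hlen)
    have r4 := Rec.geConst j1 (2 * 2 ^ N + 4) (KK N) hKK1 hKK2
    have r5 := Rec.eqConst i1 0 (KK N) hKK1 (by omega)
    exact (((r1.and r2).and r3).and r4).and r5
  · exact ⟨s, fun i => Nat.mod_lt _ (by positivity)⟩
  · dsimp only
    rw [hszy0, hy0K j1 hKj]
    refine ⟨⟨⟨⟨⟨fun i => Nat.mod_lt _ (by positivity), ?_, rfl⟩, rfl⟩, ?_⟩, hbig⟩, hy01⟩
    · have : shl s u y0 = v := shl_div_mod s v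
      rw [this]; exact hRv
    · intro p hp
      rw [hy0K _ (hK2 p hp)]
      exact hgap p hp
  · intro p hp
    rw [hy0K _ (hK2 p hp), hy0K _ (hK1 p hp)]
    exact hE p hp
  · rintro y ⟨⟨⟨⟨⟨hlt, hRy, hsm⟩, hjm⟩, hg⟩, hb⟩, hy1⟩ hEy
    have hsy := hsz y hEy hg hb
    obtain ⟨Q, _, τ, δ, hN, hδ, hRτ⟩ := hR.fin
    have hcong : Cong τ := fun x y b h => by rw [hδ, hδ, h]
    have hmod : v j1 - s ≡ y j1 - szK K y [MOD M] := by
      have e1 : (v j1 - s) + s ≡ (y j1 - szK K y) + szK K y [MOD M] := by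
        rw [Nat.sub_add_cancel (by omega), Nat.sub_add_cancel (by omega)]
        exact hjm.symm
      exact Nat.ModEq.add_right_cancel (show s ≡ szK K y [MOD M] from hsm.symm) e1
    obtain ⟨u', hu'τ, ⟨T, hT⟩, hu'K, hu'1⟩ := period_prefix τ δ hδ N hN K i1 (v j1 - s)
      (y j1 - szK K y) (by omega) (by omega) hmod u hu huK hu1
    have hwK : ∀ k ∈ K, shl (szK K y) u' y k = y k := by
      intro k hk; simp [shl, hu'K k hk]
    refine ⟨shl (szK K y) u' y, ⟨szK K y + T, ?_⟩, ?_, ?_, ?_, ?_, ?_⟩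
    · intro i
      have a1 := hT i
      have a2 := hlt i
      simp only [shl]
      rw [pow_add]
      calc 2 ^ szK K y * u' i + y i < 2 ^ szK K y * (u' i + 1) := by linarith
        _ ≤ _ := Nat.mul_le_mul_left _ a1
    · exact hRτ _ _ (hcong.shift _ _ _ _ hu'τ hlt).symm hRy
    · intro p hp
      rw [hwK _ (hK1 p hp), hwK _ (hK2 p hp)]; exact hEy p hp
    · rw [hwK _ hKj]
      simp only [shl]
      rw [hu'1, hy1, ← pow_add, Nat.add_zero]
      congr 1; omega
    · exact hwK _ hKj
    · intro p hp; exact hwK _ (hK2 p hp)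

def HH : ℕ → ℕ → ℕ
  | 0, X => 2 ^ (1 + 2 ^ X)
  | m + 1, X => 2 ^ (HH m X + 1 + 2 ^ X)

theorem HH_ge (m X : ℕ) : 2 ^ (1 + 2 ^ X) ≤ HH m X := by
  cases m with
  | zero => exact le_rfl
  | succ m => exact Nat.pow_le_pow_right (by norm_num) (by omega)

theorem gg_ge' (N : ℕ) : N * DD N * DD N ≤ gg N := by
  have h1 : 0 < (2 ^ N).factorial := Nat.factorial_pos _
  have h2 : 0 < DD N ^ N := Nat.pow_pos (by unfold DD; omega)
  have key : N ≤ (2 * (N * (2 ^ N).factorial) + 1) * (2 ^ N).factorial * DD N ^ N :=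
    (by nlinarith : N ≤ (2 * (N * (2 ^ N).factorial) + 1)).trans
      ((Nat.le_mul_of_pos_right _ h1).trans (Nat.le_mul_of_pos_right _ h2))
  exact Nat.mul_le_mul_right _ (Nat.mul_le_mul_right _ key)

theorem gg_ge (N : ℕ) : N ≤ gg N := by
  refine le_trans ?_ (gg_ge' N)
  have : 0 < DD N := by unfold DD; omega
  rw [Nat.mul_assoc]
  exact Nat.le_mul_of_pos_right _ (by positivity)

theorem gg_iter_ge (m N : ℕ) : N ≤ gg^[m] N := by
  induction m with
  | zero => exact le_rfl
  | succ m ih => rw [Function.iterate_succ_apply']; exact ih.trans (gg_ge _)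

theorem bounded_solution (m : ℕ) : ∀ (N : ℕ) (R : (ℕ → ℕ) → Prop), Rec N R → m ≤ N →
    ∀ (E : List (ℕ × ℕ)), E.length ≤ m → ∀ v, Bdd v → R v → Sol E v →
      ∃ v', (∀ i, v' i < HH m (gg^[m] N)) ∧ R v' ∧ Sol E v' := by
  have nilcase : ∀ (m N : ℕ) (R : (ℕ → ℕ) → Prop), Rec N R → ∀ v, Bdd v → R v →
      ∃ v', (∀ i, v' i < HH m (gg^[m] N)) ∧ R v' ∧ Sol [] v' := by
    intro m N R hR v hv hRv
    obtain ⟨v', h1, h2⟩ := clean hR [] v hv hRv (by simp [Sol]) 0 (by simp)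
    refine ⟨v', fun i => (h1 i).trans_le (le_trans ?_ (HH_ge m _)), h2⟩
    have := Nat.pow_le_pow_right (show 0 < 2 by norm_num) (gg_iter_ge m N)
    exact Nat.pow_le_pow_right (by norm_num) (by omega)
  induction m with
  | zero =>
    intro N R hR _ E hE v hv hRv _
    have : E = [] := by simpa using hE
    subst this
    exact nilcase 0 N R hR v hv hRv
  | succ m ih =>
    intro N R hR hmN E hlen v hv hRv hE
    rcases eq_or_ne E [] with rfl | hne
    · exact nilcase _ N R hR v hv hRv
    obtain ⟨p, hp, hmax⟩ : ∃ p ∈ E, ∀ q ∈ E, v q.2 ≤ v p.2 := by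
      obtain ⟨p, hp, h⟩ := Finset.exists_max_image E.toFinset (fun q => v q.2)
        (by simpa using hne)
      exact ⟨p, by simpa using hp, fun q hq => h q (by simpa using hq)⟩
    have hlen' : (E.erase p).length ≤ m := by
      rw [List.length_erase_of_mem hp]; omega
    have hmem : ∀ q ∈ E, q = p ∨ q ∈ E.erase p := by
      intro q hq
      by_cases h : q = p
      · exact Or.inl h
      · exact Or.inr ((List.mem_erase_of_ne h).2 hq)
    have hE' : Sol (E.erase p) v := fun q hq => hE q (List.mem_of_mem_erase hq)
    have hsol : ∀ w, Sol (E.erase p) w → w p.1 = 2 ^ w p.2 → Sol E w := by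
      intro w hw hwp q hq
      rcases hmem q hq with rfl | h
      · exact hwp
      · exact hw q h
    have hfin : ∀ w, Bdd w → R w → Sol E w →
        (∀ q ∈ E, w q.2 ≤ HH m (gg^[m] (gg N))) →
        ∃ v', (∀ i, v' i < HH (m + 1) (gg^[m + 1] N)) ∧ R v' ∧ Sol E v' := by
      intro w hw hRw hEw hb
      obtain ⟨v', a1, a2⟩ := clean hR E w hw hRw hEw _ hb
      refine ⟨v', fun i => (a1 i).trans_le ?_, a2⟩
      rw [Function.iterate_succ_apply, HH]
      have := (gg_ge N).trans (gg_iter_ge m (gg N))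
      have := Nat.pow_le_pow_right (show 0 < 2 by norm_num) this
      exact Nat.pow_le_pow_right (by norm_num) (by omega)
    -- reduce via an auxiliary relation implying the eliminated equation
    have hdirect : ∀ R1 R2 : (ℕ → ℕ) → Prop, Rec (DD N) R1 → Rec (DD N) R2 → R1 v → R2 v →
        (∀ w, R1 w → R2 w → Sol (E.erase p) w → w p.1 = 2 ^ w p.2) →
        ∃ v', (∀ i, v' i < HH (m + 1) (gg^[m + 1] N)) ∧ R v' ∧ Sol E v' := by
      intro R1 R2 hR1 hR2 h1 h2 h3
      obtain ⟨w, hw, ⟨⟨hRw, hw1⟩, hw2⟩, hEw⟩ := ih (gg N) _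
        (((hR.and hR1).and hR2).mono (gg_ge' N)) (by have := gg_ge N; omega) (E.erase p) hlen' v hv
        ⟨⟨hRv, h1⟩, h2⟩ hE'
      refine hfin w ⟨_, fun i => (hw i).trans Nat.lt_two_pow_self⟩ hRw
        (hsol w hEw (h3 w hw1 hw2 hEw)) (fun q _ => (hw _).le)
    have hKK1 : 1 ≤ KK N := Nat.le_add_left _ _
    have hKK2 : ∀ c, c ≤ 2 * 2 ^ N + 4 → c ≤ KK N ∧ 2 ^ c + 1 ≤ KK N := by
      intro c hc
      unfold KK
      have h1 : c < 2 ^ c := Nat.lt_two_pow_self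
      have h2 := Nat.pow_le_pow_right (show 0 < 2 by norm_num) hc
      omega
    by_cases hsmall : v p.2 < 2 * 2 ^ N + 4
    · obtain ⟨k1, k2⟩ := hKK2 (v p.2) hsmall.le
      refine hdirect (fun x => x p.2 = v p.2) (fun x => x p.1 = 2 ^ v p.2)
        (Rec.eqConst _ _ (KK N) hKK1 k1) (Rec.eqConst _ _ (KK N) hKK1 (by omega)) rfl (hE p hp) ?_
      intro w hw1 hw2 _
      rw [hw1, hw2]
    by_cases hclose : ∃ q ∈ E.erase p, v p.2 < v q.2 + (2 ^ N + 2)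
    · obtain ⟨q, hq, hlt⟩ := hclose
      have hqE := List.mem_of_mem_erase hq
      have hle := hmax q hqE
      obtain ⟨c, hc⟩ := Nat.exists_eq_add_of_le hle
      obtain ⟨k1, k2⟩ := hKK2 c (by omega)
      refine hdirect (fun x => x p.2 = x q.2 + c) (fun x => x p.1 = 2 ^ c * x q.1)
        (Rec.eqAdd _ _ _ (KK N) hKK1 k1) (Rec.eqMul _ _ _ (KK N) k2) hc ?_ ?_
      · rw [hE p hp, hE q hqE, hc, pow_add, mul_comm]
      · intro w hw1 hw2 hw
        rw [hw1, hw2, hw q hq, pow_add, mul_comm]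
    · push Not at hclose hsmall
      obtain ⟨R', hR', ⟨y, hy, hR'y, hEy⟩, hback⟩ := elim hR (E.erase p) p.1 p.2 v hv hRv hE'
        (hE p hp) hclose hsmall (by omega)
      obtain ⟨y', hypb, hRpy, hEy'⟩ := ih (gg N) R' hR' (by have := gg_ge N; omega) (E.erase p)
        hlen' y hy hR'y hEy
      obtain ⟨w, hw, hRw, hEw, hw1, hw2, hw3⟩ := hback y' hRpy hEy'
      refine hfin w hw hRw (hsol w hEw hw1) ?_
      intro q hq
      rcases hmem q hq with rfl | h
      · rw [hw2]; exact (hypb _).le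
      · rw [hw3 q h]; exact (hypb _).le


/-! ### Words -/

theorem wordComp_nil (j : ℕ) : wordComp j [] = 0 := rfl

theorem wordComp_append (j : ℕ) (w : List ℕ) (a : ℕ) :
    wordComp j (w ++ [a]) = 2 * wordComp j w + (if a.testBit j then 1 else 0) := by
  simp [wordComp, List.foldl_append]

theorem RawDFA.run_append (D : RawDFA) (w : List ℕ) (a : ℕ) :
    D.run (w ++ [a]) = D.step (D.run w) a := by
  simp [RawDFA.run, List.foldl_append]

/-- the letter formed by the lowest bits -/
def lett (k : ℕ) (v : ℕ → ℕ) : ℕ := ∑ j ∈ Finset.range k, 2 ^ j * (v j % 2)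

theorem lett_lt (k : ℕ) (v : ℕ → ℕ) : lett k v < 2 ^ k := by
  induction k with
  | zero => simp [lett]
  | succ k ih =>
    rw [lett, Finset.sum_range_succ, pow_succ]
    change lett k v + _ < _
    have : v k % 2 < 2 := Nat.mod_lt _ (by norm_num)
    have : 2 ^ k * (v k % 2) ≤ 2 ^ k * 1 := Nat.mul_le_mul_left _ (by omega)
    omega

theorem lett_testBit (k : ℕ) (v : ℕ → ℕ) (j : ℕ) (hj : j < k) :
    (lett k v).testBit j = decide (v j % 2 = 1) := by
  induction k with
  | zero => omega
  | succ k ih =>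
    have e : lett (k + 1) v = 2 ^ k * (v k % 2) + lett k v := by
      rw [lett, Finset.sum_range_succ, add_comm]; rfl
    rw [e, Nat.testBit_two_pow_mul_add _ (lett_lt k v)]
    by_cases h : j < k
    · rw [if_pos h, ih h]
    · have : j = k := by omega
      subst this
      rw [if_neg h, Nat.sub_self, Nat.testBit_zero]
      simp

theorem letter_ext (k a b : ℕ) (ha : a < 2 ^ k) (hb : b < 2 ^ k)
    (h : ∀ j < k, a.testBit j = b.testBit j) : a = b := by
  apply Nat.eq_of_testBit_eq
  intro j
  by_cases hj : j < k
  · exact h j hj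
  · have h2 : 2 ^ k ≤ 2 ^ j := Nat.pow_le_pow_right (by norm_num) (by omega)
    rw [Nat.testBit_lt_two_pow (ha.trans_le h2), Nat.testBit_lt_two_pow (hb.trans_le h2)]

/-- the word of length `T` with values `v` -/
def mkW (k : ℕ) : ℕ → (ℕ → ℕ) → List ℕ
  | 0, _ => []
  | T + 1, v => mkW k T (fun j => v j / 2) ++ [lett k v]

theorem lett_congr (k : ℕ) (v v' : ℕ → ℕ) (h : ∀ j < k, v j = v' j) : lett k v = lett k v' :=
  Finset.sum_congr rfl fun j hj => by rw [h j (by simpa using hj)]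

theorem mkW_congr (k T : ℕ) (v v' : ℕ → ℕ) (h : ∀ j < k, v j = v' j) :
    mkW k T v = mkW k T v' := by
  induction T generalizing v v' with
  | zero => rfl
  | succ T ih =>
    rw [mkW, mkW, lett_congr k v v' h, ih _ (fun j => v' j / 2) (fun j hj => by rw [h j hj])]

theorem mkW_lt (k T : ℕ) (v : ℕ → ℕ) : ∀ a ∈ mkW k T v, a < 2 ^ k := by
  induction T generalizing v with
  | zero => simp [mkW]
  | succ T ih =>
    intro a ha
    rw [mkW, List.mem_append] at ha
    rcases ha with h | h
    · exact ih _ a h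
    · simp only [List.mem_singleton] at h; rw [h]; exact lett_lt k v

theorem mkW_comp (k T : ℕ) (v : ℕ → ℕ) (j : ℕ) (hj : j < k) (hv : v j < 2 ^ T) :
    wordComp j (mkW k T v) = v j := by
  induction T generalizing v with
  | zero => simp at hv; simp [mkW, hv, wordComp_nil]
  | succ T ih =>
    rw [pow_succ] at hv
    rw [mkW, wordComp_append, ih _ (by omega), lett_testBit k v j hj]
    simp only [decide_eq_true_eq]
    split_ifs <;> omega

theorem eq_mkW (k : ℕ) (w : List ℕ) (v : ℕ → ℕ) (hw : ∀ a ∈ w, a < 2 ^ k)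
    (hv : ∀ j < k, wordComp j w = v j) : w = mkW k w.length v := by
  induction w using List.reverseRecOn generalizing v with
  | nil => rfl
  | append_singleton w a ih =>
    rw [List.length_append, List.length_singleton, mkW]
    have h1 : ∀ j < k, (if a.testBit j then 1 else 0) = v j % 2 ∧ wordComp j w = v j / 2 := by
      intro j hj
      have := hv j hj
      rw [wordComp_append] at this
      split_ifs at * <;> omega
    rw [← ih _ (fun b hb => hw b (by simp [hb])) (fun j hj => (h1 j hj).2)]
    congr 2
    apply letter_ext k _ _ (hw a (by simp)) (lett_lt k v)
    intro j hj
    rw [lett_testBit k v j hj, ← (h1 j hj).1]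
    cases a.testBit j <;> simp

theorem mkW_zero (k r : ℕ) : mkW k r (fun _ => 0) = List.replicate r 0 := by
  induction r with
  | zero => rfl
  | succ r ih =>
    rw [mkW, List.replicate_succ', Nat.zero_div, ih]
    congr 2
    simp [lett]

theorem mkW_pad (k r t : ℕ) (v : ℕ → ℕ) (hv : ∀ j < k, v j < 2 ^ t) :
    mkW k (r + t) v = List.replicate r 0 ++ mkW k t v := by
  induction t generalizing v with
  | zero =>
    rw [mkW_congr k _ v (fun _ => 0) (fun j hj => by have := hv j hj; simp at this; exact this),
      Nat.add_zero, mkW_zero, mkW, List.append_nil]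
  | succ t ih =>
    rw [← Nat.add_assoc, mkW, mkW, ih, List.append_assoc]
    intro j hj
    have := hv j hj
    rw [pow_succ] at this
    omega

theorem RawDFA.mkW_length_lt (k T : ℕ) (v : ℕ → ℕ) : (mkW k T v).length = T := by
  induction T generalizing v with
  | zero => rfl
  | succ T ih => simp [mkW, ih]

/-- the finite set of states that can occur -/
def RawDFA.St (D : RawDFA) : Finset ℕ := insert D.start (insert 0 D.trans.toFinset)

theorem RawDFA.St_card (D : RawDFA) : D.St.card ≤ D.trans.length + 2 := by
  have h1 := Finset.card_insert_le D.start (insert 0 D.trans.toFinset)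
  have h2 := Finset.card_insert_le 0 D.trans.toFinset
  have h3 := List.toFinset_card_le D.trans
  unfold RawDFA.St
  omega

theorem RawDFA.step_mem (D : RawDFA) (q a : ℕ) : D.step q a ∈ D.St := by
  unfold RawDFA.step RawDFA.St
  rw [List.getD_eq_getElem?_getD]
  by_cases h : q * 2 ^ D.k + a < D.trans.length
  · rw [List.getElem?_eq_getElem h]
    simp
  · rw [List.getElem?_eq_none (by omega)]
    simp

theorem RawDFA.run_mem (D : RawDFA) (w : List ℕ) : D.run w ∈ D.St := by
  induction w using List.reverseRecOn with
  | nil => simp [RawDFA.run, RawDFA.St]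
  | append_singleton w a _ => rw [D.run_append]; exact D.step_mem _ _

theorem RawDFA.iter_eq_run (D : RawDFA) (r : ℕ) :
    (fun q => D.step q 0)^[r] D.start = D.run (List.replicate r 0) := by
  induction r with
  | zero => rfl
  | succ r ih => rw [Function.iterate_succ_apply', ih, List.replicate_succ', D.run_append]

theorem RawDFA.reg_iff (D : RawDFA) (hD : D.ZeroClosed) (v : ℕ → ℕ) (t L : ℕ)
    (hv : ∀ j < D.k, v j < 2 ^ t) (hL : D.trans.length + 2 + t ≤ L) :
    (∃ w : List ℕ, D.Accepts w ∧ ∀ j < D.k, wordComp j w = v j) ↔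
      D.run (mkW D.k L v) ∈ D.accept := by
  have hpow : 2 ^ t ≤ 2 ^ L := Nat.pow_le_pow_right (by norm_num) (by omega)
  constructor
  · rintro ⟨w, hw, hwv⟩
    set P := D.trans.length + 2 with hP
    obtain ⟨r, rfl⟩ : ∃ r, L = r + t := ⟨L - t, by omega⟩
    have hper := iter_period D.St (fun q => D.step q 0) D.start
      (fun t => by rw [D.iter_eq_run]; exact D.run_mem _) P D.St_card r (by omega) w.length
    set r' := r + P.factorial * w.length with hr'
    have hr'w : w.length ≤ r' := by
      have := Nat.le_mul_of_pos_left w.length (Nat.factorial_pos P)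
      omega
    have hacc := hD (r' + t - w.length) w hw
    have hw' := eq_mkW D.k (List.replicate (r' + t - w.length) 0 ++ w) v hacc.1 (by
      intro j hj
      rw [← hwv j hj]
      have : ∀ p, wordComp j (List.replicate p 0 ++ w) = wordComp j w := by
        intro p
        unfold wordComp
        rw [List.foldl_append]
        congr 1
        induction p with
        | zero => rfl
        | succ p ih => rw [List.replicate_succ', List.foldl_append, ih]; simp
      exact this _)
    rw [List.length_append, List.length_replicate, Nat.sub_add_cancel (by omega),
      mkW_pad _ _ _ _ hv] at hw'
    have h2 := hacc.2
    rw [hw'] at h2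
    rw [mkW_pad _ _ _ _ hv]
    have e : ∀ p, D.run (List.replicate p 0 ++ mkW D.k t v) =
        (mkW D.k t v).foldl D.step ((fun q => D.step q 0)^[p] D.start) := by
      intro p; rw [D.iter_eq_run]; unfold RawDFA.run; rw [List.foldl_append]
    rw [e, hper, ← e] at h2
    exact h2
  · intro h
    exact ⟨mkW D.k L v, ⟨mkW_lt _ _ _, h⟩, fun j hj =>
      mkW_comp _ _ _ _ hj ((hv j hj).trans_le hpow)⟩

/-! ### The regular part of a formula is recognisable -/

theorem rec_reg (D : RawDFA) (xs : List ℕ) : Rec (2 ^ (D.trans.length + 3)) (fun v =>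
    ∃ w : List ℕ, D.Accepts w ∧ ∀ j < D.k, wordComp j w = v (xs.getD j 0)) := by
  classical
  let good : (ℕ → ℕ) → ℕ → Prop := fun x q => ∃ w : List ℕ, (∀ a ∈ w, a < 2 ^ D.k) ∧
    (∀ j < D.k, wordComp j w = x (xs.getD j 0)) ∧ D.run w = q
  let zer : (ℕ → ℕ) → Prop := fun x => ∀ j < D.k, x (xs.getD j 0) = 0
  have hstep : ∀ x b q, good (bitv b x) q ↔
      (zer x ∧ (∀ j < D.k, b (xs.getD j 0) = false) ∧ q = D.start) ∨
      ∃ q', good x q' ∧ ∃ a < 2 ^ D.k, (∀ j < D.k, a.testBit j = b (xs.getD j 0)) ∧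
        D.step q' a = q := by
    intro x b q
    constructor
    · rintro ⟨w, hw, hv, rfl⟩
      rcases List.eq_nil_or_concat w with rfl | ⟨w', a, rfl⟩
      · left
        have := fun j hj => (bit_eq_zero' _ _).1 (hv j hj).symm
        exact ⟨fun j hj => (this j hj).1, fun j hj => (this j hj).2, rfl⟩
      · right
        rw [List.concat_eq_append] at *
        have h1 : ∀ j < D.k, wordComp j w' = x (xs.getD j 0) ∧ a.testBit j = b (xs.getD j 0) := by
          intro j hj
          have := hv j hj
          rw [wordComp_append] at this
          simp only [bitv, Nat.bit_val] at this
          cases h : a.testBit j <;> cases h' : b (xs.getD j 0) <;>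
            simp only [h, h', Bool.toNat_true, Bool.toNat_false, if_true,
              Bool.false_eq_true, if_false] at this <;> first | omega | exact ⟨by omega, rfl⟩
        refine ⟨D.run w', ⟨w', fun c hc => hw c (by simp [hc]), fun j hj => (h1 j hj).1, rfl⟩,
          a, hw a (by simp), fun j hj => (h1 j hj).2, (D.run_append _ _).symm⟩
    · rintro (⟨h1, h2, rfl⟩ | ⟨q', ⟨w, hw, hv, rfl⟩, a, ha, hab, rfl⟩)
      · exact ⟨[], by simp, fun j hj => ((bit_eq_zero' _ _).2 ⟨h1 j hj, h2 j hj⟩).symm, rfl⟩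
      · refine ⟨w ++ [a], ?_, ?_, D.run_append _ _⟩
        · intro c hc
          rw [List.mem_append, List.mem_singleton] at hc
          rcases hc with h | rfl
          · exact hw c h
          · exact ha
        · intro j hj
          rw [wordComp_append, hv j hj, hab j hj, bitv, Nat.bit_val]
          cases b (xs.getD j 0) <;> simp
  have hmem : ∀ x q, good x q → q ∈ D.St := by
    rintro x q ⟨w, _, _, rfl⟩; exact D.run_mem w
  refine ⟨Finset ℕ × Bool, fun x => (D.St.filter (good x), decide (zer x)),
    D.St.powerset ×ˢ Finset.univ, ?_, ?_, ?_, ?_⟩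
  · rw [Finset.card_product, Finset.card_powerset, Finset.card_univ, Fintype.card_bool, ← pow_succ]
    exact Nat.pow_le_pow_right (by norm_num) (by have := D.St_card; omega)
  · intro x
    simp [Finset.filter_subset, Classical.em]
  all_goals
    have hext : ∀ x y, ((D.St.filter (good x), decide (zer x)) : Finset ℕ × Bool) =
        (D.St.filter (good y), decide (zer y)) ↔ (∀ q, good x q ↔ good y q) ∧ (zer x ↔ zer y) := by
      intro x y
      rw [Prod.mk.injEq, decide_eq_decide, Finset.ext_iff]
      refine and_congr_left fun _ => forall_congr' fun q => ?_
      simp only [Finset.mem_filter]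
      exact ⟨fun h => ⟨fun hx => (h.1 ⟨hmem x q hx, hx⟩).2, fun hy => (h.2 ⟨hmem y q hy, hy⟩).2⟩,
        fun h => and_congr_right fun _ => h⟩
  · intro x y b h
    dsimp only at h ⊢
    rw [hext] at h ⊢
    obtain ⟨h1, h2⟩ := h
    refine ⟨fun q => ?_, ?_⟩
    · rw [hstep, hstep, h2]
      simp only [h1]
    · have e : ∀ x, zer (bitv b x) ↔ zer x ∧ ∀ j < D.k, b (xs.getD j 0) = false := by
        intro x
        simp only [zer, bitv, bit_eq_zero']
        exact ⟨fun h => ⟨fun j hj => (h j hj).1, fun j hj => (h j hj).2⟩,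
          fun h j hj => ⟨h.1 j hj, h.2 j hj⟩⟩
      rw [e, e, h2]
  · intro x y h
    dsimp only at h ⊢
    rw [hext] at h
    rintro ⟨w, hw, hv⟩
    obtain ⟨w', a1, a2, a3⟩ := (h.1 (D.run w)).1 ⟨w, hw.1, hv, rfl⟩
    exact ⟨w', ⟨a1, a3 ▸ hw.2⟩, a2⟩

theorem encode_int (z : ℤ) : (Encodable.encode z : ℕ) =
    match z with | Int.ofNat n => 2 * n | Int.negSucc n => 2 * n + 1 := by
  cases z <;> rfl

theorem natAbs_le_encode (z : ℤ) : z.natAbs ≤ Encodable.encode z := by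
  rw [encode_int]
  cases z <;> simp <;> omega

theorem encode_list_sum {α : Type} [Encodable α] (l : List α) :
    (l.map Encodable.encode).sum + l.length ≤ Encodable.encode l := by
  induction l with
  | nil => simp
  | cons a l ih =>
    rw [Encodable.encode_list_cons, List.map_cons, List.sum_cons, List.length_cons]
    have := Nat.add_le_pair (Encodable.encode a) (Encodable.encode l)
    omega

theorem rec_linAtom (c : List ℤ) (b : ℤ) : Rec (2 * Encodable.encode (c, b) + 3)
    (fun v => (∑ i ∈ Finset.range c.length, c.getD i 0 * (v i : ℤ)) = b) := by
  have hpair : Encodable.encode c + Encodable.encode b ≤ Encodable.encode (c, b) := by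
    rw [Encodable.encode_prod_val]; exact Nat.add_le_pair _ _
  refine Rec.linEq _ (fun e => ∑ i ∈ Finset.range c.length, c.getD i 0 * ((e i).toNat : ℤ)) _
    ?_ ?_ b ?_
  · intro x e
    rw [Finset.mul_sum, ← Finset.sum_add_distrib]
    refine Finset.sum_congr rfl fun i _ => ?_
    rw [bitv_cast]; ring
  · intro e
    have h1 : ∀ c : List ℤ, ∑ i ∈ Finset.range c.length, |c.getD i 0| ≤
        ((c.map Encodable.encode).sum : ℕ) := by
      intro c
      induction c with
      | nil => simp
      | cons a c ih =>
        rw [List.length_cons, Finset.sum_range_succ', List.map_cons, List.sum_cons]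
        simp only [List.getD_cons_succ, List.getD_cons_zero]
        have h5 : |a| ≤ (Encodable.encode a : ℤ) := by
          have := natAbs_le_encode a
          rw [Int.abs_eq_natAbs]; exact_mod_cast this
        rw [Nat.cast_add]
        linarith
    have h2 := encode_list_sum c
    have h3 := h1 c
    calc _ ≤ ∑ i ∈ Finset.range c.length, |c.getD i 0 * ((e i).toNat : ℤ)| :=
          Finset.abs_sum_le_sum_abs _ _
      _ ≤ ∑ i ∈ Finset.range c.length, |c.getD i 0| := by
          refine Finset.sum_le_sum fun i _ => ?_
          cases e i <;> simp
      _ ≤ _ := by omega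
  · have := natAbs_le_encode b
    rw [Int.abs_eq_natAbs]
    omega

def SFml.rel (E : List (ℕ × ℕ)) (v : ℕ → ℕ) : SFml → Prop
  | .lin c b => (∑ i ∈ Finset.range c.length, c.getD i 0 * (v i : ℤ)) = b
  | .expo i j => (i, j) ∈ E
  | .reg D xs => ∃ w : List ℕ, D.Accepts w ∧ ∀ j < D.k, wordComp j w = v (xs.getD j 0)
  | .and φ ψ => φ.rel E v ∧ ψ.rel E v
  | .or φ ψ => φ.rel E v ∨ ψ.rel E v

def SFml.expos : SFml → List (ℕ × ℕ)
  | .lin _ _ => []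
  | .expo i j => [(i, j)]
  | .reg _ _ => []
  | .and φ ψ => φ.expos ++ ψ.expos
  | .or φ ψ => φ.expos ++ ψ.expos

theorem pair3_ge (t a b : ℕ) : t + a + b ≤ Nat.pair t (Nat.pair a b) := by
  have h1 := Nat.add_le_pair t (Nat.pair a b)
  have h2 := Nat.add_le_pair a b
  omega

theorem SFml.expos_length (Φ : SFml) : Φ.expos.length ≤ Φ.enc := by
  induction Φ with
  | lin c b => simp [expos]
  | expo i j => have := pair3_ge 1 i j; simp only [expos, enc, List.length_singleton]; omega
  | reg D xs => simp [expos]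
  | and φ ψ h1 h2 =>
    have := pair3_ge 3 φ.enc ψ.enc; simp only [expos, enc, List.length_append]; omega
  | or φ ψ h1 h2 =>
    have := pair3_ge 4 φ.enc ψ.enc; simp only [expos, enc, List.length_append]; omega

theorem RawDFA.length_le_enc (D : RawDFA) : D.trans.length ≤ D.enc := by
  have h0 := encode_list_sum D.trans
  unfold RawDFA.enc
  simp only [Encodable.encode_prod_val]
  have h1 := Nat.right_le_pair (Encodable.encode D.k) (Nat.pair (Encodable.encode D.states)
    (Nat.pair (Encodable.encode D.trans) (Nat.pair (Encodable.encode D.start)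
      (Encodable.encode D.accept))))
  have h2 := Nat.right_le_pair (Encodable.encode D.states)
    (Nat.pair (Encodable.encode D.trans) (Nat.pair (Encodable.encode D.start)
      (Encodable.encode D.accept)))
  have h3 := Nat.left_le_pair (Encodable.encode D.trans) (Nat.pair (Encodable.encode D.start)
      (Encodable.encode D.accept))
  omega

theorem SFml.rec_rel (E : List (ℕ × ℕ)) (Φ : SFml) :
    Rec (2 ^ (Φ.enc + 3)) (fun v => Φ.rel E v) := by
  have hmul : ∀ t a b, 3 ≤ t → 2 ^ (a + 3) * 2 ^ (b + 3) ≤ 2 ^ (Nat.pair t (Nat.pair a b) + 3) := by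
    intro t a b ht
    rw [← pow_add]
    exact Nat.pow_le_pow_right (by norm_num) (by have := pair3_ge t a b; omega)
  induction Φ with
  | lin c b =>
    refine (rec_linAtom c b).mono ?_
    have h1 := Nat.right_le_pair 0 (Encodable.encode (c, b))
    simp only [SFml.enc]
    have h2 : Nat.pair 0 (Encodable.encode (c, b)) < 2 ^ Nat.pair 0 (Encodable.encode (c, b)) :=
      Nat.lt_two_pow_self
    rw [pow_add]
    omega
  | expo i j => exact (Rec.const _).mono (Nat.one_le_two_pow)
  | reg D xs =>
    refine (rec_reg D xs).mono (Nat.pow_le_pow_right (by norm_num) ?_)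
    have h1 := pair3_ge 2 D.enc (Encodable.encode xs)
    have h2 := D.length_le_enc
    simp only [SFml.enc]
    omega
  | and φ ψ h1 h2 => exact (h1.and h2).mono (hmul 3 _ _ le_rfl)
  | or φ ψ h1 h2 => exact (h1.or h2).mono (hmul 4 _ _ (by norm_num))

theorem SFml.rel_of_sat (Φ : SFml) (E : List (ℕ × ℕ)) (v : ℕ → ℕ) (h : Φ.Sat v)
    (hE : ∀ p ∈ Φ.expos, v p.1 = 2 ^ v p.2 → p ∈ E) : Φ.rel E v := by
  induction Φ with
  | lin c b => exact h
  | expo i j => exact hE (i, j) (by simp [expos]) h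
  | reg D xs => exact h
  | and φ ψ h1 h2 =>
    exact ⟨h1 h.1 fun p hp => hE p (by simp [expos, hp]), h2 h.2 fun p hp => hE p (by simp [expos, hp])⟩
  | or φ ψ h1 h2 =>
    rcases h with h | h
    · exact Or.inl (h1 h fun p hp => hE p (by simp [expos, hp]))
    · exact Or.inr (h2 h fun p hp => hE p (by simp [expos, hp]))

theorem SFml.sat_of_rel (Φ : SFml) (E : List (ℕ × ℕ)) (v : ℕ → ℕ) (h : Φ.rel E v)
    (hE : Sol E v) : Φ.Sat v := by
  induction Φ with
  | lin c b => exact h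
  | expo i j => exact hE _ h
  | reg D xs => exact h
  | and φ ψ h1 h2 => exact ⟨h1 h.1, h2 h.2⟩
  | or φ ψ h1 h2 => exact h.imp h1 h2

theorem getD_le_encode (xs : List ℕ) (j : ℕ) : xs.getD j 0 ≤ Encodable.encode xs := by
  induction xs generalizing j with
  | nil => simp
  | cons a l ih =>
    rw [Encodable.encode_list_cons]
    have h := Nat.add_le_pair (Encodable.encode a) (Encodable.encode l)
    cases j with
    | zero => simp only [List.getD_cons_zero, Encodable.encode_nat] at *; omega
    | succ j => have := ih j; simp only [List.getD_cons_succ]; omega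

theorem SFml.sat_congr (Φ : SFml) (n : ℕ) (hn : Φ.enc ≤ n) (v v' : ℕ → ℕ)
    (h : ∀ i < n, v i = v' i) : Φ.Sat v → Φ.Sat v' := by
  induction Φ with
  | lin c b =>
    have h1 : c.length ≤ n := by
      have := encode_list_sum c
      have h2 : Encodable.encode c ≤ Encodable.encode (c, b) := by
        rw [Encodable.encode_prod_val]; exact Nat.left_le_pair _ _
      have h3 := Nat.right_le_pair 0 (Encodable.encode (c, b))
      simp only [enc] at hn
      omega
    intro hs
    simp only [Sat] at hs ⊢
    rw [← hs]
    refine Finset.sum_congr rfl fun i hi => ?_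
    rw [h i (by rw [Finset.mem_range] at hi; omega)]
  | expo i j =>
    have := pair3_ge 1 i j
    simp only [enc] at hn
    intro hs
    simp only [Sat] at hs ⊢
    rw [← h i (by omega), ← h j (by omega), hs]
  | reg D xs =>
    have := pair3_ge 2 D.enc (Encodable.encode xs)
    simp only [enc] at hn
    rintro ⟨w, hw, hv⟩
    refine ⟨w, hw, fun j hj => ?_⟩
    rw [hv j hj, h]
    have := getD_le_encode xs j
    omega
  | and φ ψ h1 h2 =>
    have := pair3_ge 3 φ.enc ψ.enc
    simp only [enc] at hn
    exact fun hs => ⟨h1 (by omega) hs.1, h2 (by omega) hs.2⟩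
  | or φ ψ h1 h2 =>
    have := pair3_ge 4 φ.enc ψ.enc
    simp only [enc] at hn
    exact fun hs => hs.imp (h1 (by omega)) (h2 (by omega))

def bnd (n : ℕ) : ℕ := HH n (gg^[n] (2 ^ (n + 3)))

theorem SFml.small_model (Φ : SFml) (v : ℕ → ℕ) (h : Φ.Sat v) :
    ∃ v' : ℕ → ℕ, (∀ i, v' i < bnd Φ.enc) ∧ Φ.Sat v' := by
  classical
  set n := Φ.enc with hn
  let v1 : ℕ → ℕ := fun i => if i < n then v i else 0
  have h1 : Φ.Sat v1 := Φ.sat_congr n le_rfl v v1 (fun i hi => by simp [v1, hi]) h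
  have hb : Bdd v1 := by
    refine ⟨∑ i ∈ Finset.range n, v i, fun i => ?_⟩
    refine lt_of_le_of_lt ?_ Nat.lt_two_pow_self
    by_cases hi : i < n
    · simp only [v1, hi, if_true]
      exact Finset.single_le_sum (f := v) (fun _ _ => Nat.zero_le _) (Finset.mem_range.2 hi)
    · simp [v1, hi]
  let E := Φ.expos.filter (fun p => v1 p.1 = 2 ^ v1 p.2)
  have hE : Sol E v1 := by
    intro p hp
    simpa using (List.mem_filter.1 hp).2
  have hlen : E.length ≤ n := (List.length_filter_le _ _).trans Φ.expos_length
  obtain ⟨v', a1, a2, a3⟩ := bounded_solution n (2 ^ (n + 3)) _ (Φ.rec_rel E)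
    (by have : n + 3 < 2 ^ (n + 3) := Nat.lt_two_pow_self
        omega) E hlen v1 hb
    (Φ.rel_of_sat E v1 h1 fun p hp hv => List.mem_filter.2 ⟨hp, by simpa using hv⟩) hE
  exact ⟨v', a1, Φ.sat_of_rel E v' a2 a3⟩


/-! ### The checker -/

/-- `a = (t, c, L)`; the `i`-th block of `t` bits of `c` -/
def vl (a : ℕ × ℕ × ℕ) (i : ℕ) : ℕ := a.2.1 / 2 ^ (a.1 * i) % 2 ^ a.1

theorem vl_lt (a : ℕ × ℕ × ℕ) (i : ℕ) : vl a i < 2 ^ a.1 := Nat.mod_lt _ (by positivity)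

theorem vl_exists (t L n : ℕ) : ∀ v : ℕ → ℕ, (∀ i, v i < 2 ^ t) →
    ∃ c < 2 ^ (t * n), ∀ i < n, vl (t, c, L) i = v i := by
  induction n with
  | zero => intro v _; exact ⟨0, by simp, by simp⟩
  | succ n ih =>
    intro v hv
    obtain ⟨c, hc, h⟩ := ih (fun i => v (i + 1)) (fun i => hv _)
    have h0 := hv 0
    have hpos : 0 < 2 ^ t := by positivity
    refine ⟨v 0 + 2 ^ t * c, ?_, ?_⟩
    · have e : 2 ^ (t * (n + 1)) = 2 ^ t * 2 ^ (t * n) := by rw [← pow_add]; ring_nf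
      rw [e]
      calc v 0 + 2 ^ t * c < 2 ^ t + 2 ^ t * c := by omega
        _ = 2 ^ t * (c + 1) := by ring
        _ ≤ _ := Nat.mul_le_mul_left _ hc
    · intro i hi
      cases i with
      | zero =>
        simp only [vl, Nat.mul_zero, pow_zero, Nat.div_one, Nat.add_mul_mod_self_left]
        exact Nat.mod_eq_of_lt h0
      | succ i =>
        rw [← h i (by omega)]
        have e : 2 ^ (t * (i + 1)) = 2 ^ t * 2 ^ (t * i) := by rw [← pow_add]; ring_nf
        simp only [vl]
        rw [e, ← Nat.div_div_eq_div_mul, Nat.add_mul_div_left _ _ hpos,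
          Nat.div_eq_of_lt h0, Nat.zero_add]

def posp (z : ℕ) : ℕ := if z % 2 = 0 then z / 2 else 0
def negp (z : ℕ) : ℕ := if z % 2 = 0 then 0 else z / 2 + 1

theorem pos_neg (z : ℤ) : (posp (Encodable.encode z) : ℤ) - negp (Encodable.encode z) = z := by
  cases z with
  | ofNat n =>
    have : Encodable.encode (Int.ofNat n) = 2 * n := encode_int _
    rw [this, posp, negp, if_pos (by omega), if_pos (by omega)]
    simp
  | negSucc n =>
    have : Encodable.encode (Int.negSucc n) = 2 * n + 1 := encode_int _
    rw [this, posp, negp, if_neg (by omega), if_neg (by omega), Int.negSucc_eq]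
    have : (2 * n + 1) / 2 = n := by omega
    rw [this]; push_cast; ring

def linDec (m : ℕ) : List ℕ × ℕ := (Encodable.decode m : Option (List ℕ × ℕ)).getD ([], 0)

theorem encode_list_map (c : List ℤ) :
    Encodable.encode (c.map Encodable.encode) = Encodable.encode c := by
  induction c with
  | nil => rfl
  | cons a c ih =>
    rw [List.map_cons, Encodable.encode_list_cons, Encodable.encode_list_cons, ih]; rfl

theorem linDec_enc (c : List ℤ) (b : ℤ) : linDec (Encodable.encode (c, b)) =
    (c.map Encodable.encode, Encodable.encode b) := by
  have : Encodable.encode (c, b) = Encodable.encode (c.map Encodable.encode, Encodable.encode b) := by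
    rw [Encodable.encode_prod_val, Encodable.encode_prod_val, encode_list_map]; rfl
  rw [linDec, this, Encodable.encodek]; rfl

def linCk (a : ℕ × ℕ × ℕ) (m : ℕ) : Bool :=
  decide ((∑ i ∈ Finset.range (linDec m).1.length, posp ((linDec m).1.getD i 0) * vl a i) +
      negp (linDec m).2 =
    (∑ i ∈ Finset.range (linDec m).1.length, negp ((linDec m).1.getD i 0) * vl a i) +
      posp (linDec m).2)

theorem linCk_iff (a : ℕ × ℕ × ℕ) (c : List ℤ) (b : ℤ) :
    linCk a (Encodable.encode (c, b)) = true ↔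
      (∑ i ∈ Finset.range c.length, c.getD i 0 * (vl a i : ℤ)) = b := by
  rw [linCk, linDec_enc, decide_eq_true_iff]
  simp only [List.length_map]
  have e : (∑ i ∈ Finset.range c.length, c.getD i 0 * (vl a i : ℤ)) =
      ((∑ i ∈ Finset.range c.length, posp ((c.map Encodable.encode).getD i 0) * vl a i : ℕ) : ℤ) -
      ((∑ i ∈ Finset.range c.length, negp ((c.map Encodable.encode).getD i 0) * vl a i : ℕ) : ℤ) := by
    rw [Nat.cast_sum, Nat.cast_sum, ← Finset.sum_sub_distrib]
    refine Finset.sum_congr rfl fun i hi => ?_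
    have hi' : i < c.length := by simpa using hi
    have h1 : (c.map Encodable.encode).getD i 0 = Encodable.encode (c.getD i 0) := by
      rw [List.getD_eq_getElem _ _ (by simpa using hi'), List.getD_eq_getElem _ _ hi']; simp
    rw [h1, Nat.cast_mul, Nat.cast_mul, ← sub_mul, pos_neg]
  rw [e]
  have hb := pos_neg b
  constructor
  · intro h
    have h' := congrArg (Nat.cast : ℕ → ℤ) h
    rw [Nat.cast_add, Nat.cast_add] at h'
    linarith
  · intro h
    apply Nat.cast_injective (R := ℤ)
    rw [Nat.cast_add, Nat.cast_add]
    linarith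

abbrev Dt := ℕ × ℕ × List ℕ × ℕ × List ℕ

def dfaDec (m : ℕ) : Dt := (Encodable.decode m : Option Dt).getD (0, 0, [], 0, [])

def listDec (m : ℕ) : List ℕ := (Encodable.decode m : Option (List ℕ)).getD []

theorem dfaDec_enc (D : RawDFA) :
    dfaDec D.enc = (D.k, D.states, D.trans, D.start, D.accept) := by
  rw [dfaDec, RawDFA.enc, Encodable.encodek]; rfl

theorem listDec_enc (xs : List ℕ) : listDec (Encodable.encode xs) = xs := by
  rw [listDec, Encodable.encodek]; rfl

/-- one step of the automaton simulation; `p = (a, d, xs)` -/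
def stStep (p : (ℕ × ℕ × ℕ) × Dt × List ℕ) (q : ℕ × ℕ) : ℕ :=
  p.2.1.2.2.1.getD (q.2 * 2 ^ p.2.1.1 +
    ∑ j ∈ Finset.range p.2.1.1,
      2 ^ j * (vl p.1 (p.2.2.getD j 0) / 2 ^ (p.1.2.2 - 1 - q.1) % 2)) 0

def stF (p : (ℕ × ℕ × ℕ) × Dt × List ℕ) (r : ℕ) : ℕ :=
  Nat.rec (motive := fun _ => ℕ) p.2.1.2.2.2.1 (fun r s => stStep p (r, s)) r

theorem stF_eq (a : ℕ × ℕ × ℕ) (D : RawDFA) (xs : List ℕ) (r : ℕ) (hr : r ≤ a.2.2) :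
    stF (a, (D.k, D.states, D.trans, D.start, D.accept), xs) r =
      D.run (mkW D.k r (fun j => vl a (xs.getD j 0) / 2 ^ (a.2.2 - r))) := by
  induction r with
  | zero => rfl
  | succ r ih =>
    rw [mkW, D.run_append]
    have e : (fun j => vl a (xs.getD j 0) / 2 ^ (a.2.2 - (r + 1)) / 2) =
        (fun j => vl a (xs.getD j 0) / 2 ^ (a.2.2 - r)) := by
      funext j
      rw [Nat.div_div_eq_div_mul, ← pow_succ]
      congr 2
      omega
    rw [e, ← ih (by omega)]
    have e2 : a.2.2 - (r + 1) = a.2.2 - 1 - r := by omega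
    rw [e2]
    rfl

def regCk (a : ℕ × ℕ × ℕ) (m : ℕ) : Bool :=
  decide ((dfaDec m.unpair.1).2.2.2.2.idxOf
      (stF (a, dfaDec m.unpair.1, listDec m.unpair.2) a.2.2) <
    (dfaDec m.unpair.1).2.2.2.2.length)

theorem regCk_iff (a : ℕ × ℕ × ℕ) (D : RawDFA) (hD : D.ZeroClosed) (xs : List ℕ)
    (hL : D.trans.length + 2 + a.1 ≤ a.2.2) :
    regCk a (Nat.pair D.enc (Encodable.encode xs)) = true ↔
      ∃ w : List ℕ, D.Accepts w ∧ ∀ j < D.k, wordComp j w = vl a (xs.getD j 0) := by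
  rw [regCk, decide_eq_true_iff, Nat.unpair_pair, dfaDec_enc, listDec_enc,
    stF_eq a D xs _ le_rfl, List.idxOf_lt_length_iff,
    D.reg_iff hD (fun j => vl a (xs.getD j 0)) a.1 a.2.2 (fun j _ => vl_lt _ _) hL]
  simp

def evStep (a : ℕ × ℕ × ℕ) (l : List Bool) : Bool :=
  bif decide (l.length.unpair.1 = 0) then linCk a l.length.unpair.2
  else bif decide (l.length.unpair.1 = 1) then
    decide (vl a l.length.unpair.2.unpair.1 = 2 ^ vl a l.length.unpair.2.unpair.2)
  else bif decide (l.length.unpair.1 = 2) then regCk a l.length.unpair.2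
  else bif decide (l.length.unpair.1 = 3) then
    l.getD l.length.unpair.2.unpair.1 false && l.getD l.length.unpair.2.unpair.2 false
  else l.getD l.length.unpair.2.unpair.1 false || l.getD l.length.unpair.2.unpair.2 false

def evs (a : ℕ × ℕ × ℕ) (n : ℕ) : List Bool :=
  Nat.rec (motive := fun _ => List Bool) [] (fun _ l => l ++ [evStep a l]) n

def ev (a : ℕ × ℕ × ℕ) (n : ℕ) : Bool := evStep a (evs a n)

theorem evs_eq (a : ℕ × ℕ × ℕ) (n : ℕ) : evs a n = (List.range n).map (ev a) := by
  induction n with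
  | zero => rfl
  | succ n ih =>
    have : evs a (n + 1) = evs a n ++ [ev a n] := rfl
    rw [this, ih, List.range_succ, List.map_append, List.map_singleton]

theorem evs_getD (a : ℕ × ℕ × ℕ) (n i : ℕ) (h : i < n) : (evs a n).getD i false = ev a i := by
  rw [evs_eq, List.getD_eq_getElem _ _ (by simpa using h)]; simp

theorem evs_length (a : ℕ × ℕ × ℕ) (n : ℕ) : (evs a n).length = n := by
  rw [evs_eq]; simp

theorem ev_iff (Φ : SFml) (hW : Φ.WF) (a : ℕ × ℕ × ℕ) (hL : a.1 + Φ.enc ≤ a.2.2) :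
    ev a Φ.enc = true ↔ Φ.Sat (vl a) := by
  induction Φ with
  | lin c b =>
    rw [SFml.Sat, ← linCk_iff, ev, evStep, evs_length, SFml.enc]
    simp [Nat.unpair_pair]
  | expo i j =>
    rw [SFml.Sat, ev, evStep, evs_length, SFml.enc]
    simp [Nat.unpair_pair]
  | reg D xs =>
    have h1 := pair3_ge 2 D.enc (Encodable.encode xs)
    have h2 := D.length_le_enc
    simp only [SFml.enc] at hL
    rw [SFml.Sat, ← regCk_iff a D hW.2.2 xs (by omega), ev, evStep, evs_length, SFml.enc]
    simp [Nat.unpair_pair]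
  | and φ ψ h1 h2 =>
    have h := pair3_ge 3 φ.enc ψ.enc
    simp only [SFml.enc] at hL
    rw [SFml.Sat, ← h1 hW.1 (by omega), ← h2 hW.2 (by omega), ev, evStep, evs_length, SFml.enc]
    simp only [Nat.unpair_pair]
    rw [evs_getD _ _ _ (by omega), evs_getD _ _ _ (by omega)]
    simp
  | or φ ψ h1 h2 =>
    have h := pair3_ge 4 φ.enc ψ.enc
    simp only [SFml.enc] at hL
    rw [SFml.Sat, ← h1 hW.1 (by omega), ← h2 hW.2 (by omega), ev, evStep, evs_length, SFml.enc]
    simp only [Nat.unpair_pair]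
    rw [evs_getD _ _ _ (by omega), evs_getD _ _ _ (by omega)]
    simp

/-! ### Primitive recursiveness -/

section
variable {α β : Type} [Primcodable α] [Primcodable β]

theorem pr_add {f g : α → ℕ} (hf : Primrec f) (hg : Primrec g) : Primrec fun a => f a + g a :=
  Primrec.nat_add.comp hf hg

theorem pr_sub {f g : α → ℕ} (hf : Primrec f) (hg : Primrec g) : Primrec fun a => f a - g a :=
  Primrec.nat_sub.comp hf hg

theorem pr_mul {f g : α → ℕ} (hf : Primrec f) (hg : Primrec g) : Primrec fun a => f a * g a :=
  Primrec.nat_mul.comp hf hg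

theorem pr_div {f g : α → ℕ} (hf : Primrec f) (hg : Primrec g) : Primrec fun a => f a / g a :=
  Primrec.nat_div.comp hf hg

theorem pr_mod {f g : α → ℕ} (hf : Primrec f) (hg : Primrec g) : Primrec fun a => f a % g a :=
  Primrec.nat_mod.comp hf hg

theorem pr_pow {f g : α → ℕ} (hf : Primrec f) (hg : Primrec g) : Primrec fun a => f a ^ g a :=
  (Primrec₂.unpaired'.1 Nat.Primrec.pow : Primrec₂ ((· ^ ·) : ℕ → ℕ → ℕ)).comp hf hg

theorem pr_eq {f g : α → ℕ} (hf : Primrec f) (hg : Primrec g) :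
    Primrec fun a => decide (f a = g a) :=
  PrimrecPred.decide (PrimrecRel.comp Primrec.eq hf hg)

theorem pr_lt {f g : α → ℕ} (hf : Primrec f) (hg : Primrec g) :
    Primrec fun a => decide (f a < g a) :=
  PrimrecPred.decide (PrimrecRel.comp Primrec.nat_lt hf hg)

theorem pr_getD (d : β) {f : α → List β} {g : α → ℕ} (hf : Primrec f) (hg : Primrec g) :
    Primrec fun a => (f a).getD (g a) d :=
  (Primrec.list_getD d).comp hf hg

theorem pr_c (n : ℕ) : Primrec fun _ : α => n := Primrec.const n

theorem pr_sum {n : α → ℕ} {f : α → ℕ → ℕ} (hn : Primrec n)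
    (hf : Primrec fun p : α × ℕ => f p.1 p.2) :
    Primrec fun a => ∑ i ∈ Finset.range (n a), f a i := by
  have h : Primrec₂ (fun (a : α) (p : ℕ × ℕ) => p.2 + f a p.1) :=
    pr_add (Primrec.snd.comp Primrec.snd)
      (hf.comp (Primrec.pair Primrec.fst (Primrec.fst.comp Primrec.snd)))
  refine (Primrec.nat_rec' hn (pr_c 0) h).of_eq fun a => ?_
  generalize n a = m
  induction m with
  | zero => rfl
  | succ m ih => rw [Finset.sum_range_succ, ← ih]

theorem pr_u1 {f : α → ℕ} (hf : Primrec f) : Primrec fun a => (f a).unpair.1 :=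
  Primrec.fst.comp (Primrec.unpair.comp hf)

theorem pr_u2 {f : α → ℕ} (hf : Primrec f) : Primrec fun a => (f a).unpair.2 :=
  Primrec.snd.comp (Primrec.unpair.comp hf)

theorem pr_fact {f : α → ℕ} (hf : Primrec f) : Primrec fun a => (f a).factorial := by
  have h : Primrec₂ (fun (_ : α) (p : ℕ × ℕ) => (p.1 + 1) * p.2) :=
    pr_mul (pr_add (Primrec.fst.comp Primrec.snd) (pr_c 1)) (Primrec.snd.comp Primrec.snd)
  refine (Primrec.nat_rec' hf (pr_c 1) h).of_eq fun a => ?_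
  generalize f a = m
  induction m with
  | zero => rfl
  | succ m ih => rw [Nat.factorial_succ, ← ih]

theorem pr_vl {f : α → ℕ × ℕ × ℕ} {g : α → ℕ} (hf : Primrec f) (hg : Primrec g) :
    Primrec fun a => vl (f a) (g a) :=
  pr_mod (pr_div (Primrec.fst.comp (Primrec.snd.comp hf))
    (pr_pow (pr_c 2) (pr_mul (Primrec.fst.comp hf) hg))) (pr_pow (pr_c 2) (Primrec.fst.comp hf))

theorem pr_posp {f : α → ℕ} (hf : Primrec f) : Primrec fun a => posp (f a) :=
  Primrec.ite (PrimrecRel.comp Primrec.eq (pr_mod hf (pr_c 2)) (pr_c 0))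
    (pr_div hf (pr_c 2)) (pr_c 0)

theorem pr_negp {f : α → ℕ} (hf : Primrec f) : Primrec fun a => negp (f a) :=
  Primrec.ite (PrimrecRel.comp Primrec.eq (pr_mod hf (pr_c 2)) (pr_c 0))
    (pr_c 0) (pr_add (pr_div hf (pr_c 2)) (pr_c 1))

theorem pr_linDec : Primrec linDec :=
  Primrec.option_getD.comp Primrec.decode (Primrec.const _)

theorem pr_dfaDec : Primrec dfaDec :=
  Primrec.option_getD.comp Primrec.decode (Primrec.const _)

theorem pr_listDec : Primrec listDec :=
  Primrec.option_getD.comp Primrec.decode (Primrec.const _)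

theorem pr_linCk : Primrec₂ linCk := by
  have h1 : Primrec fun p : (ℕ × ℕ × ℕ) × ℕ => linDec p.2 := pr_linDec.comp Primrec.snd
  have hl : Primrec fun p : (ℕ × ℕ × ℕ) × ℕ => (linDec p.2).1.length :=
    Primrec.list_length.comp (Primrec.fst.comp h1)
  have hb : Primrec fun p : (ℕ × ℕ × ℕ) × ℕ => (linDec p.2).2 := Primrec.snd.comp h1
  have hg : Primrec fun q : ((ℕ × ℕ × ℕ) × ℕ) × ℕ => (linDec q.1.2).1.getD q.2 0 :=
    pr_getD 0 (Primrec.fst.comp (h1.comp Primrec.fst)) Primrec.snd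
  have hv : Primrec fun q : ((ℕ × ℕ × ℕ) × ℕ) × ℕ => vl q.1.1 q.2 :=
    pr_vl (Primrec.fst.comp Primrec.fst) Primrec.snd
  exact pr_eq
    (pr_add (pr_sum (f := fun (p : (ℕ × ℕ × ℕ) × ℕ) i => posp ((linDec p.2).1.getD i 0) * vl p.1 i)
      hl (pr_mul (pr_posp hg) hv)) (pr_negp hb))
    (pr_add (pr_sum (f := fun (p : (ℕ × ℕ × ℕ) × ℕ) i => negp ((linDec p.2).1.getD i 0) * vl p.1 i)
      hl (pr_mul (pr_negp hg) hv)) (pr_posp hb))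

theorem pr_stStep : Primrec₂ stStep := by
  have hd : Primrec fun z : ((ℕ × ℕ × ℕ) × Dt × List ℕ) × (ℕ × ℕ) => z.1.2.1 :=
    Primrec.fst.comp (Primrec.snd.comp Primrec.fst)
  have hk : Primrec fun z : ((ℕ × ℕ × ℕ) × Dt × List ℕ) × (ℕ × ℕ) => z.1.2.1.1 :=
    Primrec.fst.comp hd
  have ht : Primrec fun z : ((ℕ × ℕ × ℕ) × Dt × List ℕ) × (ℕ × ℕ) => z.1.2.1.2.2.1 :=
    Primrec.fst.comp (Primrec.snd.comp (Primrec.snd.comp hd))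
  have hx : Primrec fun z : ((ℕ × ℕ × ℕ) × Dt × List ℕ) × (ℕ × ℕ) => z.1.2.2 :=
    Primrec.snd.comp (Primrec.snd.comp Primrec.fst)
  have ha : Primrec fun z : ((ℕ × ℕ × ℕ) × Dt × List ℕ) × (ℕ × ℕ) => z.1.1 :=
    Primrec.fst.comp Primrec.fst
  have hL : Primrec fun z : ((ℕ × ℕ × ℕ) × Dt × List ℕ) × (ℕ × ℕ) => z.1.1.2.2 - 1 - z.2.1 :=
    pr_sub (pr_sub (Primrec.snd.comp (Primrec.snd.comp ha)) (pr_c 1))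
      (Primrec.fst.comp Primrec.snd)
  have hq : Primrec fun z : ((ℕ × ℕ × ℕ) × Dt × List ℕ) × (ℕ × ℕ) => z.2.2 :=
    Primrec.snd.comp Primrec.snd
  have hs := pr_sum (f := fun (z : ((ℕ × ℕ × ℕ) × Dt × List ℕ) × (ℕ × ℕ)) j =>
      2 ^ j * (vl z.1.1 (z.1.2.2.getD j 0) / 2 ^ (z.1.1.2.2 - 1 - z.2.1) % 2)) hk
    (pr_mul (pr_pow (pr_c 2) Primrec.snd)
      (pr_mod (pr_div (pr_vl (ha.comp Primrec.fst) (pr_getD 0 (hx.comp Primrec.fst) Primrec.snd))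
        (pr_pow (pr_c 2) (hL.comp Primrec.fst))) (pr_c 2)))
  exact pr_getD 0 ht (pr_add (pr_mul hq (pr_pow (pr_c 2) hk)) hs)

theorem pr_stF : Primrec₂ stF :=
  Primrec.nat_rec (Primrec.fst.comp (Primrec.snd.comp (Primrec.snd.comp (Primrec.snd.comp
    (Primrec.fst.comp Primrec.snd))))) pr_stStep

theorem pr_regCk : Primrec₂ regCk := by
  have hd : Primrec fun p : (ℕ × ℕ × ℕ) × ℕ => dfaDec p.2.unpair.1 :=
    pr_dfaDec.comp (pr_u1 Primrec.snd)
  have hx : Primrec fun p : (ℕ × ℕ × ℕ) × ℕ => listDec p.2.unpair.2 :=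
    pr_listDec.comp (pr_u2 Primrec.snd)
  have hacc : Primrec fun p : (ℕ × ℕ × ℕ) × ℕ => (dfaDec p.2.unpair.1).2.2.2.2 :=
    Primrec.snd.comp (Primrec.snd.comp (Primrec.snd.comp (Primrec.snd.comp hd)))
  exact pr_lt (Primrec.list_idxOf.comp
    (pr_stF.comp (Primrec.pair Primrec.fst (Primrec.pair hd hx))
      (Primrec.snd.comp (Primrec.snd.comp Primrec.fst))) hacc)
    (Primrec.list_length.comp hacc)

theorem pr_evStep : Primrec₂ evStep := by
  have hn : Primrec fun p : (ℕ × ℕ × ℕ) × List Bool => p.2.length :=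
    Primrec.list_length.comp Primrec.snd
  have ht := pr_u1 hn
  have hm := pr_u2 hn
  have g1 : Primrec fun p : (ℕ × ℕ × ℕ) × List Bool =>
      p.2.getD p.2.length.unpair.2.unpair.1 false := pr_getD false Primrec.snd (pr_u1 hm)
  have g2 : Primrec fun p : (ℕ × ℕ × ℕ) × List Bool =>
      p.2.getD p.2.length.unpair.2.unpair.2 false := pr_getD false Primrec.snd (pr_u2 hm)
  exact Primrec.cond (pr_eq ht (pr_c 0)) (pr_linCk.comp Primrec.fst hm)
    (Primrec.cond (pr_eq ht (pr_c 1))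
      (pr_eq (pr_vl Primrec.fst (pr_u1 hm)) (pr_pow (pr_c 2) (pr_vl Primrec.fst (pr_u2 hm))))
      (Primrec.cond (pr_eq ht (pr_c 2)) (pr_regCk.comp Primrec.fst hm)
        (Primrec.cond (pr_eq ht (pr_c 3)) (Primrec.and.comp g1 g2) (Primrec.or.comp g1 g2))))

theorem pr_evs : Primrec₂ evs := by
  have h : Primrec₂ fun (a : ℕ × ℕ × ℕ) (p : ℕ × List Bool) => p.2 ++ [evStep a p.2] :=
    Primrec.list_concat.comp (Primrec.snd.comp Primrec.snd)
      (pr_evStep.comp Primrec.fst (Primrec.snd.comp Primrec.snd))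
  exact Primrec.nat_rec (Primrec.const []) h

theorem pr_ev : Primrec₂ ev :=
  pr_evStep.comp Primrec.fst (pr_evs.comp Primrec.fst Primrec.snd)

theorem pr_DD {f : α → ℕ} (hf : Primrec f) : Primrec fun a => DD (f a) :=
  pr_add (pr_mul (pr_c 2) (pr_add (pr_pow (pr_c 2)
    (pr_add (pr_mul (pr_c 2) (pr_pow (pr_c 2) hf)) (pr_c 4))) (pr_c 1))) (pr_c 3)

theorem pr_gg {f : α → ℕ} (hf : Primrec f) : Primrec fun a => gg (f a) := by
  have h2 := pr_fact (pr_pow (pr_c 2) hf)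
  have hD := pr_DD hf
  exact pr_mul (pr_mul (pr_mul (pr_mul (pr_add (pr_mul (pr_c 2) (pr_mul hf h2)) (pr_c 1)) h2)
    (pr_pow hD hf)) hD) hD

theorem pr_HH {f g : α → ℕ} (hf : Primrec f) (hg : Primrec g) :
    Primrec fun a => HH (f a) (g a) := by
  have h : Primrec₂ (fun (a : α) (p : ℕ × ℕ) => 2 ^ (p.2 + 1 + 2 ^ g a)) :=
    pr_pow (pr_c 2) (pr_add (pr_add (Primrec.snd.comp Primrec.snd) (pr_c 1))
      (pr_pow (pr_c 2) (hg.comp Primrec.fst)))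
  refine (Primrec.nat_rec' hf (pr_pow (pr_c 2) (pr_add (pr_c 1) (pr_pow (pr_c 2) hg))) h).of_eq
    fun a => ?_
  generalize f a = m
  induction m with
  | zero => rfl
  | succ m ih => rw [HH, ← ih]

theorem pr_bnd : Primrec bnd :=
  pr_HH Primrec.id (Primrec.nat_iterate Primrec.id
    (pr_pow (pr_c 2) (pr_add Primrec.id (pr_c 3))) (pr_gg Primrec.snd).to₂)

end

def semSearch (n : ℕ) : Prop :=
  ∃ c < 2 ^ (bnd n * n), ev (bnd n, c, bnd n + n) n = true

theorem pr_semSearch : PrimrecPred semSearch := by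
  have hR : PrimrecRel fun (c n : ℕ) => ev (bnd n, c, bnd n + n) n = true := by
    have h : Primrec₂ fun (c n : ℕ) => ev (bnd n, c, bnd n + n) n :=
      pr_ev.comp (Primrec.pair (pr_bnd.comp Primrec.snd) (Primrec.pair Primrec.fst
        (pr_add (pr_bnd.comp Primrec.snd) Primrec.snd))) Primrec.snd
    exact PrimrecRel.comp Primrec.eq h (Primrec.const true)
  exact hR.exists_lt.comp (pr_pow (pr_c 2) (pr_mul pr_bnd Primrec.id)) Primrec.id

theorem semSearch_iff (Φ : SFml) (hW : Φ.WF) : semSearch Φ.enc ↔ ∃ v : ℕ → ℕ, Φ.Sat v := by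
  constructor
  · rintro ⟨c, _, h⟩
    exact ⟨_, (ev_iff Φ hW _ (by simp)).1 h⟩
  · rintro ⟨v, hv⟩
    obtain ⟨v', h1, h2⟩ := Φ.small_model v hv
    obtain ⟨c, hc, h3⟩ := vl_exists (bnd Φ.enc) (bnd Φ.enc + Φ.enc) Φ.enc v'
      (fun i => (h1 i).trans Nat.lt_two_pow_self)
    exact ⟨c, hc, (ev_iff Φ hW _ (by simp)).2
      (Φ.sat_congr Φ.enc le_rfl v' _ (fun i hi => (h3 i hi).symm) h2)⟩

/-- Satisfiability of quantifier-free formulas of generalised Semënov arithmetic is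
decidable: a computable function on Gödel encodings returns `true` exactly on the
satisfiable formulas. -/
theorem generalised_semenov_satisfiability_decidable :
    ∃ f : ℕ → Bool, Computable f ∧
      ∀ Φ : SFml, Φ.WF → (f Φ.enc = true ↔ ∃ v : ℕ → ℕ, Φ.Sat v) := by
  classical
  refine ⟨fun n => decide (semSearch n), pr_semSearch.decide.to_comp, fun Φ hW => ?_⟩
  rw [decide_eq_true_iff]
  exact semSearch_iff Φ hW
end

section
/- Let m, n ≥ 1, A ∈ ℤ^{m×n}, b ∈ ℤ^m, let I be a finite index set and p, q : I → {1, …, n}. Then there exists a restricted laVASS V of dimension 2·|I| over the alphabet Σ_n = {0,1}^n such that ⟦L(V)⟧ = {x ∈ ℕ^n : A·x = b and x_{p(i)} = 2^{x_{q(i)}} for all i ∈ I}. Moreover, there is an absolute constant c (independent of A, b, I, m, n) such that V can be chosen with at most (‖A‖_{1,∞} + ‖b‖_∞ + 2)^{c·(m+|I|)} control states. -/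
/-- A labelled affine VASS: a finite set of control states `Q`, dimension `d`, alphabet `σ`,
a finite set of transitions `Δ ⊆ Q × σ × Q`, an update function assigning to each transition
and each counter an affine function `x ↦ a·x + b` (coded by the pair `(a, b)`), an initial
control state, a set of final control states and a set of final counter values. -/
structure LAVASS (σ : Type) (d : ℕ) where
  Q : Type
  fintypeQ : Fintype Q
  Δ : Set (Q × σ × Q)
  finΔ : Δ.Finite
  upd : Q × σ × Q → Fin d → ℤ × ℤ
  init : Q
  F : Set Q
  Sf : Set (Fin d → ℕ)

namespace LAVASS

variable {σ : Type} {d : ℕ}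

/-- Configurations: a control state together with `d` counter values in `ℕ`. -/
abbrev Config (V : LAVASS σ d) := V.Q × (Fin d → ℕ)

/-- The initial configuration `(q₀, 0, …, 0)`. -/
def initConfig (V : LAVASS σ d) : V.Config := (V.init, fun _ => 0)

/-- One step of the configuration graph, reading letter `a`: there is a transition
`(q, a, q') ∈ Δ` and every counter is updated by its affine function, the result being
a natural number (non-negativity is built into the type). -/
def Step (V : LAVASS σ d) (c : V.Config) (a : σ) (c' : V.Config) : Prop :=
  (c.1, a, c'.1) ∈ V.Δ ∧
    ∀ i : Fin d,
      (c'.2 i : ℤ) = (V.upd (c.1, a, c'.1) i).1 * (c.2 i : ℤ) + (V.upd (c.1, a, c'.1) i).2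

/-- Extension of the step relation to words. -/
def Reach (V : LAVASS σ d) : V.Config → List σ → V.Config → Prop
  | c, [], c' => c = c'
  | c, a :: w, c' => ∃ c₁, Step V c a c₁ ∧ Reach V c₁ w c'

/-- The language of `V`: words leading from the initial configuration to a final one. -/
def Lang (V : LAVASS σ d) : Set (List σ) :=
  {w | ∃ c', Reach V V.initConfig w c' ∧ c'.1 ∈ V.F ∧ c'.2 ∈ V.Sf}

/-- A run from the initial configuration, as a list of successive configurations. -/
def IsRunFromInit (V : LAVASS σ d) (cs : List V.Config) : Prop :=
  cs.head? = some V.initConfig ∧ cs.Chain' (fun c c' => ∃ a, Step V c a c')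

end LAVASS

/-- Index of the counter `x_i` in a counter pair `(x_i, y_i)`. -/
def xIdx {d : ℕ} (i : Fin d) : Fin (2 * d) := ⟨2 * i.1, by omega⟩

/-- Index of the counter `y_i` in a counter pair `(x_i, y_i)`. -/
def yIdx {d : ℕ} (i : Fin d) : Fin (2 * d) := ⟨2 * i.1 + 1, by omega⟩

/-- A restricted laVASS: an laVASS of dimension `2d` whose counters form pairs `(x_i, y_i)`
such that (i) every update on `x_i` is the identity or the increment and every update on
`y_i` is `x ↦ 2x` or `x ↦ 2x+1`; (ii) along every run from the initial configuration, once
an increment is applied to `x_i`, every subsequent transition increments `x_i`; and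
(iii) the final counter values are exactly those with `x_i = y_i` for all `i`. -/
def IsRestricted {σ : Type} (d : ℕ) (V : LAVASS σ (2 * d)) : Prop :=
  (∀ t ∈ V.Δ, ∀ i : Fin d,
      (V.upd t (xIdx i) = (1, 0) ∨ V.upd t (xIdx i) = (1, 1)) ∧
      (V.upd t (yIdx i) = (2, 0) ∨ V.upd t (yIdx i) = (2, 1))) ∧
  (∀ cs : List V.Config, V.IsRunFromInit cs → ∀ i : Fin d,
      ∀ j : ℕ, ∀ hj : j + 1 < cs.length,
        (cs.get ⟨j + 1, hj⟩).2 (xIdx i) = (cs.get ⟨j, by omega⟩).2 (xIdx i) + 1 →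
        ∀ j' : ℕ, j ≤ j' → ∀ hj' : j' + 1 < cs.length,
          (cs.get ⟨j' + 1, hj'⟩).2 (xIdx i) = (cs.get ⟨j', by omega⟩).2 (xIdx i) + 1) ∧
  V.Sf = {v | ∀ i : Fin d, v (xIdx i) = v (yIdx i)}

/-- `⟦w⟧ ∈ ℕ^k`: the tuple denoted by a word over `{0,1}^k` in msd-first notation. -/
def wordVal {k : ℕ} (w : List (Fin k → Bool)) : Fin k → ℕ :=
  w.foldl (fun acc u j => 2 * acc j + (u j).toNat) fun _ => 0

/-- A language over `{0,1}^k` is zero-closed if `L = 0⃗^* · L`. -/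
def ZeroClosed {k : ℕ} (L : Set (List (Fin k → Bool))) : Prop :=
  L = {w | ∃ (p : ℕ) (u : List (Fin k → Bool)),
        u ∈ L ∧ w = List.replicate p (fun _ => false) ++ u}

/-- `‖A‖_{1,∞}`: the maximum over the rows of the sum of absolute values of the entries. -/
def matNorm {m n : ℕ} (A : Matrix (Fin m) (Fin n) ℤ) : ℕ :=
  Finset.univ.sup fun i => ∑ j, (A i j).natAbs

/-- `‖b‖_∞`: the maximum absolute value of the entries. -/
def vecNorm {m : ℕ} (b : Fin m → ℤ) : ℕ :=
  Finset.univ.sup fun i => (b i).natAbs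

theorem wordVal_snoc {k : ℕ} (w : List (Fin k → Bool)) (a : Fin k → Bool) (j : Fin k) :
    wordVal (w ++ [a]) j = 2 * wordVal w j + (a j).toNat := by
  simp [wordVal]

theorem wordVal_surj_aux {k : ℕ} (N : ℕ) : ∀ x : Fin k → ℕ, (∀ j, x j < 2 ^ N) →
    ∃ w, wordVal w = x := by
  induction N with
  | zero =>
    intro x hx
    refine ⟨[], ?_⟩
    funext j
    have := hx j
    simp [wordVal] at *
    omega
  | succ N ih =>
    intro x hx
    obtain ⟨w, hw⟩ := ih (fun j => x j / 2) (fun j => by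
      have := hx j
      rw [pow_succ] at this
      omega)
    refine ⟨w ++ [fun j => decide (x j % 2 = 1)], ?_⟩
    funext j
    rw [wordVal_snoc, hw]
    by_cases h : x j % 2 = 1 <;> simp [h] <;> omega

theorem wordVal_surj {k : ℕ} (x : Fin k → ℕ) : ∃ w, wordVal w = x := by
  apply wordVal_surj_aux (∑ j, x j) x
  intro j
  calc x j ≤ ∑ j, x j := Finset.single_le_sum (fun _ _ => Nat.zero_le _) (Finset.mem_univ j)
    _ < _ := Nat.lt_two_pow_self

theorem LAVASS.reach_snoc {σ : Type} {d : ℕ} (V : LAVASS σ d) (w : List σ) (a : σ) :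
    ∀ (c c' : V.Config), V.Reach c (w ++ [a]) c' ↔ ∃ c₁, V.Reach c w c₁ ∧ V.Step c₁ a c' := by
  induction w with
  | nil => intro c c'; simp [LAVASS.Reach]
  | cons b w ih =>
    intro c c'
    simp only [List.cons_append, LAVASS.Reach, ih]
    constructor
    · rintro ⟨c₁, h1, c₂, h2, h3⟩
      exact ⟨c₂, ⟨c₁, h1, h2⟩, h3⟩
    · rintro ⟨c₂, ⟨c₁, h1, h2⟩, h3⟩
      exact ⟨c₁, h1, c₂, h2, h3⟩

theorem idx_cases {d : ℕ} (k : Fin (2 * d)) : (∃ i : Fin d, k = xIdx i) ∨ ∃ i : Fin d, k = yIdx i := by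
  have hk := k.2
  rcases Nat.even_or_odd' k.1 with ⟨c, h | h⟩
  · left; exact ⟨⟨c, by omega⟩, Fin.ext h⟩
  · right; exact ⟨⟨c, by omega⟩, Fin.ext h⟩

theorem idx_forall {d : ℕ} {P : Fin (2 * d) → Prop} :
    (∀ k, P k) ↔ ∀ i : Fin d, P (xIdx i) ∧ P (yIdx i) := by
  constructor
  · intro h i; exact ⟨h _, h _⟩
  · intro h k
    rcases idx_cases k with ⟨i, rfl⟩ | ⟨i, rfl⟩
    · exact (h i).1
    · exact (h i).2

/-- A function on counters given by its values on the pairs. -/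
def pairFun {d : ℕ} {α : Type} (f g : Fin d → α) (k : Fin (2 * d)) : α :=
  if k.1 % 2 = 0 then f ⟨k.1 / 2, by omega⟩ else g ⟨k.1 / 2, by omega⟩

@[simp] theorem pairFun_x {d : ℕ} {α : Type} (f g : Fin d → α) (i : Fin d) :
    pairFun f g (xIdx i) = f i := by
  simp [pairFun, xIdx]

@[simp] theorem pairFun_y {d : ℕ} {α : Type} (f g : Fin d → α) (i : Fin d) :
    pairFun f g (yIdx i) = g i := by
  have h : (2 * i.1 + 1) / 2 = i.1 := by omega
  simp [pairFun, yIdx, h, Nat.add_mod]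

/-- The automaton. The control state stores the current value of `A·x` and, for each pair,
whether the leading one of `x_{P i}` has been read. -/
noncomputable def semV {m n d : ℕ} (A : Matrix (Fin m) (Fin n) ℤ) (b : Fin m → ℤ) (B : ℕ)
    (P R : Fin d → Fin n) : LAVASS (Fin n → Bool) (2 * d) where
  Q := (Fin m → Set.Icc (-(B : ℤ)) B) × (Fin d → Bool)
  fintypeQ := inferInstance
  Δ := {t | (∀ r, (t.2.2.1 r : ℤ) = 2 * (t.1.1 r : ℤ) + ∑ j, A r j * ((t.2.1 j).toNat : ℤ)) ∧
    ∀ i, t.2.2.2 i = (t.1.2 i || t.2.1 (P i)) ∧ ¬ (t.1.2 i = true ∧ t.2.1 (P i) = true)}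
  finΔ := Set.toFinite _
  upd t := pairFun (fun i => (1, ((t.1.2 i).toNat : ℤ))) (fun i => (2, ((t.2.1 (R i)).toNat : ℤ)))
  init := (fun _ => ⟨0, by simp⟩, fun _ => false)
  F := {s | (∀ r, (s.1 r : ℤ) = b r) ∧ ∀ i, s.2 i = true}
  Sf := {v | ∀ i : Fin d, v (xIdx i) = v (yIdx i)}

section
variable {m n d : ℕ} (A : Matrix (Fin m) (Fin n) ℤ) (b : Fin m → ℤ) (B : ℕ)
    (P R : Fin d → Fin n)

theorem semV_step (c c' : (semV A b B P R).Config) (u : Fin n → Bool) :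
    (semV A b B P R).Step c u c' ↔
      (∀ r, (c'.1.1 r : ℤ) = 2 * (c.1.1 r : ℤ) + ∑ j, A r j * ((u j).toNat : ℤ)) ∧
      (∀ i, c'.1.2 i = (c.1.2 i || u (P i)) ∧ ¬ (c.1.2 i = true ∧ u (P i) = true)) ∧
      ∀ i, c'.2 (xIdx i) = c.2 (xIdx i) + (c.1.2 i).toNat ∧
        c'.2 (yIdx i) = 2 * c.2 (yIdx i) + (u (R i)).toNat := by
  unfold LAVASS.Step
  rw [idx_forall]
  simp only [semV, pairFun_x, pairFun_y]
  rw [← and_assoc]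
  refine and_congr Iff.rfl <| forall_congr' fun i => ?_
  constructor <;> rintro ⟨h1, h2⟩ <;> constructor <;> first | omega | (push_cast; linarith) | skip

/-- The invariant of the automaton. -/
def SemGood (w : List (Fin n → Bool)) (c : (semV A b B P R).Config) : Prop :=
  (∀ r, (c.1.1 r : ℤ) = ∑ j, A r j * (wordVal w j : ℤ)) ∧
  ∀ i, (c.1.2 i = true ↔ wordVal w (P i) ≠ 0) ∧
    (wordVal w (P i) ≠ 0 → wordVal w (P i) = 2 ^ c.2 (xIdx i)) ∧
    (wordVal w (P i) = 0 → c.2 (xIdx i) = 0) ∧ c.2 (yIdx i) = wordVal w (R i)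

theorem sum_snoc (w : List (Fin n → Bool)) (u : Fin n → Bool) (r : Fin m) :
    ∑ j, A r j * (wordVal (w ++ [u]) j : ℤ) =
      2 * ∑ j, A r j * (wordVal w j : ℤ) + ∑ j, A r j * ((u j).toNat : ℤ) := by
  rw [Finset.mul_sum, ← Finset.sum_add_distrib]
  refine Finset.sum_congr rfl fun j _ => ?_
  rw [wordVal_snoc]; push_cast; ring

theorem semGood_step (w : List (Fin n → Bool)) (u : Fin n → Bool)
    (c c' : (semV A b B P R).Config) (h : SemGood A b B P R w c)
    (hs : (semV A b B P R).Step c u c') : SemGood A b B P R (w ++ [u]) c' := by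
  rw [semV_step] at hs
  obtain ⟨hs1, hs2, hs3⟩ := hs
  obtain ⟨h1, h2⟩ := h
  refine ⟨fun r => ?_, fun i => ?_⟩
  · rw [hs1, h1, sum_snoc]
  · obtain ⟨g1, g2, g3, g4⟩ := h2 i
    obtain ⟨k1, k2⟩ := hs2 i
    obtain ⟨l1, l2⟩ := hs3 i
    rw [wordVal_snoc, wordVal_snoc, k1, l1, l2, g4]
    cases hf : c.1.2 i <;> cases hu : u (P i) <;> simp [hf, hu] at g1 g2 g3 k2 ⊢
    · simp [g1] at g3 ⊢; exact g3
    · simp [g1] at g3 ⊢; simp [g3]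
    · refine ⟨g1, fun _ => ?_, fun h => absurd h g1⟩
      rw [g2 g1, pow_succ, mul_comm]

theorem semGood_nil (c : (semV A b B P R).Config) :
    SemGood A b B P R [] c ↔ (semV A b B P R).initConfig = c := by
  constructor
  · rintro ⟨h1, h2⟩
    obtain ⟨⟨s, f⟩, v⟩ := c
    simp only [wordVal, List.foldl_nil, Nat.cast_zero, mul_zero, Finset.sum_const_zero] at h1 h2
    refine Prod.ext (Prod.ext ?_ ?_) ?_
    · funext r; apply Subtype.ext; exact (h1 r).symm
    · funext i
      have := (h2 i).1
      simp at this
      exact this.symm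
    · funext k
      revert k
      rw [idx_forall]
      intro i
      have := (h2 i).2
      simp [LAVASS.initConfig] at this ⊢
      omega
  · rintro rfl
    simp [SemGood, LAVASS.initConfig, semV, wordVal]

theorem semGood_of_reach (w : List (Fin n → Bool)) : ∀ (c : (semV A b B P R).Config),
    (semV A b B P R).Reach (semV A b B P R).initConfig w c → SemGood A b B P R w c := by
  induction w using List.reverseRecOn with
  | nil => intro c h; exact (semGood_nil A b B P R c).2 h
  | append_singleton w u ih =>
    intro c h
    rw [LAVASS.reach_snoc] at h
    obtain ⟨c₁, h1, h2⟩ := h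
    exact semGood_step A b B P R w u c₁ c (ih _ h1) h2

theorem reach_of_semGood (hA : ∀ r, ∑ j, (A r j).natAbs ≤ B) (w : List (Fin n → Bool)) :
    ∀ (c : (semV A b B P R).Config), SemGood A b B P R w c →
    (semV A b B P R).Reach (semV A b B P R).initConfig w c := by
  induction w using List.reverseRecOn with
  | nil => intro c h; exact (semGood_nil A b B P R c).1 h
  | append_singleton w u ih =>
    intro c h
    rw [LAVASS.reach_snoc]
    obtain ⟨h1, h2⟩ := h
    have hb : ∀ r, (∑ j, A r j * (wordVal w j : ℤ)) ∈ Set.Icc (-(B : ℤ)) B := by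
      intro r
      have e1 := h1 r
      rw [sum_snoc] at e1
      have e2 : |∑ j, A r j * ((u j).toNat : ℤ)| ≤ B := by
        calc |∑ j, A r j * ((u j).toNat : ℤ)| ≤ ∑ j, |A r j * ((u j).toNat : ℤ)| :=
              Finset.abs_sum_le_sum_abs _ _
          _ ≤ ∑ j, ((A r j).natAbs : ℤ) := by
              refine Finset.sum_le_sum fun j _ => ?_
              cases u j <;> simp
          _ ≤ B := by exact_mod_cast hA r
      have e3 := (c.1.1 r).2
      rw [Set.mem_Icc] at e3 ⊢
      rw [abs_le] at e2
      omega
    let c₁ : (semV A b B P R).Config :=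
      ((fun r => ⟨_, hb r⟩, fun i => decide (wordVal w (P i) ≠ 0)),
        pairFun (fun i => c.2 (xIdx i) - 1) (fun i => wordVal w (R i)))
    have key : ∀ i, (wordVal w (P i) ≠ 0 → u (P i) = false ∧ 1 ≤ c.2 (xIdx i) ∧
        wordVal w (P i) = 2 ^ (c.2 (xIdx i) - 1)) ∧ (wordVal w (P i) = 0 → c.2 (xIdx i) = 0) := by
      intro i
      obtain ⟨g1, g2, g3, g4⟩ := h2 i
      rw [wordVal_snoc] at g1 g2 g3
      generalize wordVal w (P i) = v at *
      generalize c.2 (xIdx i) = k at *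
      cases hu : u (P i) <;> simp [hu] at g2 g3 ⊢
      · refine ⟨fun hv => ?_, g3⟩
        have := g2 hv
        cases k with
        | zero => simp at this
        | succ k => rw [pow_succ] at this; simp; omega
      · cases k with
        | zero => simp at g2; simp [g2]
        | succ k => rw [pow_succ] at g2; omega
    refine ⟨c₁, ih _ ⟨fun r => rfl, fun i => ?_⟩, ?_⟩
    · simp only [c₁, pairFun_x, pairFun_y]
      refine ⟨by simp, fun h => ((key i).1 h).2.2, fun h => by simp [(key i).2 h], by trivial⟩
    · rw [semV_step]
      refine ⟨fun r => ?_, fun i => ?_, fun i => ?_⟩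
      · rw [h1, sum_snoc]
      · obtain ⟨g1, g2, g3, g4⟩ := h2 i
        obtain ⟨k1, k2⟩ := key i
        rw [wordVal_snoc] at g1
        constructor
        · rw [Bool.eq_iff_iff, g1]
          simp only [c₁, Bool.or_eq_true, decide_eq_true_eq]
          cases u (P i) <;> simp
        · simp only [c₁, decide_eq_true_eq]
          rintro ⟨h, h'⟩
          simp [(k1 h).1] at h'
      · obtain ⟨g1, g2, g3, g4⟩ := h2 i
        obtain ⟨k1, k2⟩ := key i
        simp only [c₁, pairFun_x, pairFun_y]
        refine ⟨?_, by rw [g4, wordVal_snoc]⟩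
        by_cases hv : wordVal w (P i) = 0
        · simp [hv, k2 hv]
        · have := (k1 hv).2.1
          simp [hv]; omega

theorem semV_restricted : IsRestricted d (semV A b B P R) := by
  refine ⟨?_, ?_, rfl⟩
  · intro t _ i
    simp only [semV, pairFun_x, pairFun_y]
    constructor
    · cases t.1.2 i <;> simp
    · cases t.2.1 (R i) <;> simp
  · rintro cs ⟨_, hc⟩ i j hj hinc j' hjj' hj'
    have hstep : ∀ k (hk : k + 1 < cs.length),
        ∃ a, (semV A b B P R).Step (cs.get ⟨k, by omega⟩) a (cs.get ⟨k + 1, hk⟩) := by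
      intro k hk
      exact List.isChain_iff_getElem.1 hc k hk
    have h0 : (cs.get ⟨j, by omega⟩).1.2 i = true := by
      obtain ⟨a, ha⟩ := hstep j hj
      rw [semV_step] at ha
      have := (ha.2.2 i).1
      rw [hinc] at this
      cases h : (cs.get ⟨j, by omega⟩).1.2 i
      · rw [h] at this; simp at this
      · rfl
    have hmono : ∀ k (hk : k < cs.length), j ≤ k → (cs.get ⟨k, hk⟩).1.2 i = true := by
      intro k hk hjk
      induction k, hjk using Nat.le_induction with
      | base => exact h0
      | succ k hjk ih =>
        obtain ⟨a, ha⟩ := hstep k hk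
        rw [semV_step] at ha
        rw [(ha.2.1 i).1, ih (by omega)]; rfl
    obtain ⟨a, ha⟩ := hstep j' hj'
    rw [semV_step] at ha
    rw [(ha.2.2 i).1, hmono j' (by omega) hjj']; rfl

theorem semV_card :
    @Fintype.card (semV A b B P R).Q (semV A b B P R).fintypeQ ≤ (B + 2) ^ (2 * (m + d)) := by
  have h : @Fintype.card (semV A b B P R).Q (semV A b B P R).fintypeQ = (2 * B + 1) ^ m * 2 ^ d := by
    change Fintype.card ((Fin m → Set.Icc (-(B : ℤ)) B) × (Fin d → Bool)) = _
    have : Fintype.card (Set.Icc (-(B : ℤ)) B) = 2 * B + 1 := by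
      rw [Fintype.card_ofFinset, Int.card_Icc]; omega
    rw [Fintype.card_prod, Fintype.card_fun, Fintype.card_fun, this]
    simp
  rw [h, pow_mul, pow_add]
  have h2 : 2 * B + 1 ≤ (B + 2) ^ 2 := by nlinarith
  have h3 : 2 ≤ (B + 2) ^ 2 := by
    have : (B + 2) ^ 2 = B * B + 4 * B + 4 := by ring
    omega
  exact Nat.mul_le_mul (Nat.pow_le_pow_left h2 m) (Nat.pow_le_pow_left h3 d)

theorem semV_lang (hA : ∀ r, ∑ j, (A r j).natAbs ≤ B) (hb : ∀ r, (b r).natAbs ≤ B) :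
    wordVal '' (semV A b B P R).Lang = {x : Fin n → ℕ |
      A.mulVec (fun j => (x j : ℤ)) = b ∧ ∀ i, x (P i) = 2 ^ x (R i)} := by
  ext x
  constructor
  · rintro ⟨w, ⟨c, hr, hF, hS⟩, rfl⟩
    obtain ⟨h1, h2⟩ := semGood_of_reach A b B P R w c hr
    obtain ⟨hF1, hF2⟩ := hF
    refine ⟨?_, fun i => ?_⟩
    · funext r
      rw [← hF1 r, h1 r]; rfl
    · obtain ⟨g1, g2, g3, g4⟩ := h2 i
      rw [g2 (g1.1 (hF2 i)), hS i, g4]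
  · rintro ⟨h1, h2⟩
    obtain ⟨w, rfl⟩ := wordVal_surj x
    refine ⟨w, ⟨((fun r => ⟨b r, by have := hb r; rw [Set.mem_Icc]; omega⟩, fun _ => true),
      pairFun (fun i => wordVal w (R i)) (fun i => wordVal w (R i))), ?_, ?_, ?_⟩, rfl⟩
    · apply reach_of_semGood A b B P R hA
      refine ⟨fun r => (congrFun h1 r).symm, fun i => ?_⟩
      simp [h2 i]
    · exact ⟨fun r => rfl, fun i => rfl⟩
    · intro i; simp

end

/-- For `m, n ≥ 1`, `A ∈ ℤ^{m×n}`, `b ∈ ℤ^m`, a finite index set `ι` and `p, q : ι → {1,…,n}`,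
there is a restricted laVASS `V` of dimension `2·|ι|` over `{0,1}^n` with
`⟦L(V)⟧ = {x ∈ ℕ^n : A·x = b ∧ x_{p(i)} = 2^{x_{q(i)}} for all i}`, whose number of control
states is at most `(‖A‖_{1,∞} + ‖b‖_∞ + 2)^{c·(m+|ι|)}` for an absolute constant `c`. -/
theorem conjunctive_semenov_lavass :
    ∃ c : ℕ, ∀ (m n : ℕ), 1 ≤ m → 1 ≤ n →
      ∀ (A : Matrix (Fin m) (Fin n) ℤ) (b : Fin m → ℤ)
        (ι : Type) [Fintype ι] (p q : ι → Fin n),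
        ∃ V : LAVASS (Fin n → Bool) (2 * Fintype.card ι),
          IsRestricted (Fintype.card ι) V ∧
          @Fintype.card V.Q V.fintypeQ ≤
            (matNorm A + vecNorm b + 2) ^ (c * (m + Fintype.card ι)) ∧
          wordVal '' V.Lang =
            {x : Fin n → ℕ |
              A.mulVec (fun j => (x j : ℤ)) = b ∧ ∀ i : ι, x (p i) = 2 ^ x (q i)} := by
  refine ⟨2, fun m n _ _ A b ι _ p q => ?_⟩
  let e := (Fintype.equivFin ι).symm
  refine ⟨semV A b (matNorm A + vecNorm b) (p ∘ e) (q ∘ e), semV_restricted _ _ _ _ _,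
    semV_card _ _ _ _ _, ?_⟩
  rw [semV_lang]
  · ext x
    simp only [Set.mem_ofPred_eq, Function.comp]
    exact and_congr_right fun _ => e.forall_congr_left.trans (by simp)
  · intro r
    exact (Finset.le_sup (f := fun i => ∑ j, (A i j).natAbs) (Finset.mem_univ r)).trans
      (Nat.le_add_right _ _)
  · intro r
    exact (Finset.le_sup (f := fun i => (b i).natAbs) (Finset.mem_univ r)).trans
      (Nat.le_add_left _ _)
end
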